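/- arXiv:1302.3866 — 3 statements merged into one kernel-verified Lean document; each statement's English description precedes it below -/
import Mathlib

section
/- Let A satisfy (H1), β_i > -2 for all i ∈ I, and let u be a finite-energy radial solution of the singular Liouville system. If φ = (φ_1,...,φ_n) solves the linearized system (r φ_i'(r))' + Σ_{j=1}^n a_{ij} r^{β_j+1} e^{u_j(r)} φ_j(r) = 0 for 0 < r < ∞, is continuous at 0, and satisfies φ_i(0) = 0 for all i ∈ I, then φ_i ≡ 0 for all i ∈ I. -/
open Set MeasureTheory

/-- Hypothesis (H1): symmetric, nonnegative entries, irreducible, invertible. -/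
def H1 {n : ℕ} (A : Matrix (Fin n) (Fin n) ℝ) : Prop :=
  A.IsSymm ∧ (∀ i j, 0 ≤ A i j) ∧
  (∀ S : Finset (Fin n), S.Nonempty → S ≠ Finset.univ → ∃ i ∈ S, ∃ j ∈ Sᶜ, A i j ≠ 0) ∧
  IsUnit A.det

/-- Radial solution of the singular Liouville system, with the finite-energy condition. -/
def RadialSolution {n : ℕ} (A : Matrix (Fin n) (Fin n) ℝ) (β : Fin n → ℝ)
    (u : Fin n → ℝ → ℝ) : Prop :=
  (∀ i, ∀ r > (0:ℝ), ContDiffAt ℝ 2 (u i) r) ∧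
  (∀ i, ∀ r > (0:ℝ),
    deriv (deriv (u i)) r + (1 / r) * deriv (u i) r
      + ∑ j, A i j * r ^ β j * Real.exp (u j r) = 0) ∧
  (∀ i, IntegrableOn (fun r : ℝ => r ^ (β i + 1) * Real.exp (u i r)) (Set.Ioi 0))

/-- Solution of the linearized system (rφ_i')' + Σ_j a_{ij} r^{β_j+1} e^{u_j} φ_j = 0. -/
def LinearizedSolution {n : ℕ} (A : Matrix (Fin n) (Fin n) ℝ) (β : Fin n → ℝ)
    (u φ : Fin n → ℝ → ℝ) : Prop :=
  (∀ i, ∀ r > (0:ℝ), ContDiffAt ℝ 2 (φ i) r) ∧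
  (∀ i, ∀ r > (0:ℝ),
    deriv (fun s => s * deriv (φ i) s) r
      + ∑ j, A i j * r ^ (β j + 1) * Real.exp (u j r) * φ j r = 0)


open Filter Topology

lemma aux_convex_nonneg {T : ℝ} {g g1 g2 : ℝ → ℝ} (h1 : ∀ t, HasDerivAt g (g1 t) t)
    (h2 : ∀ t, HasDerivAt g1 (g2 t) t) (h3 : ∀ t < T, 0 ≤ g2 t)
    (h0 : Tendsto g atBot (𝓝 0)) : ∀ t ≤ T, 0 ≤ g t := by
  have hc : ConvexOn ℝ (Iic T) g := by
    refine convexOn_of_hasDerivWithinAt2_nonneg (f' := g1) (f'' := g2) (convex_Iic T)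
      (fun t _ => (h1 t).continuousAt.continuousWithinAt)
      (fun t _ => (h1 t).hasDerivWithinAt) (fun t _ => (h2 t).hasDerivWithinAt) ?_
    intro t ht
    rw [interior_Iic] at ht
    exact h3 t ht
  intro t ht
  have key : ∀ᶠ s in atBot, 2 * g s - g (2 * s - t) ≤ g t := by
    filter_upwards [eventually_le_atBot t] with s hs
    have hm : 2 * s - t ∈ Iic T := by simp only [mem_Iic]; linarith [show t ≤ T from ht]
    have := hc.2 (mem_Iic.2 ht) hm (by norm_num : (0:ℝ) ≤ 1/2) (by norm_num : (0:ℝ) ≤ 1/2)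
      (by norm_num)
    simp only [smul_eq_mul] at this
    have e : 1 / 2 * t + 1 / 2 * (2 * s - t) = s := by ring
    rw [e] at this
    linarith
  have hl : Tendsto (fun s : ℝ => 2 * s - t) atBot atBot :=
    tendsto_atBot_add_const_right _ (-t) (tendsto_id.const_mul_atBot (by norm_num : (0:ℝ) < 2))
  have lim : Tendsto (fun s => 2 * g s - g (2 * s - t)) atBot (𝓝 (2 * 0 - 0)) :=
    (h0.const_mul 2).sub (h0.comp hl)
  have := le_of_tendsto lim key
  linarith

lemma aux_compare {T M : ℝ} {f f1 f2 W W1 W2 : ℝ → ℝ} (h1 : ∀ t, HasDerivAt f (f1 t) t)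
    (h2 : ∀ t, HasDerivAt f1 (f2 t) t) (k1 : ∀ t, HasDerivAt W (W1 t) t)
    (k2 : ∀ t, HasDerivAt W1 (W2 t) t) (h3 : ∀ t < T, |f2 t| ≤ M * W2 t)
    (h0 : Tendsto f atBot (𝓝 0)) (k0 : Tendsto W atBot (𝓝 0)) :
    ∀ t ≤ T, |f t| ≤ M * W t := by
  intro t ht
  rw [abs_le]
  constructor
  · have := aux_convex_nonneg (T := T) (g := fun t => M * W t + f t)
      (fun t => ((k1 t).const_mul M).add (h1 t)) (fun t => ((k2 t).const_mul M).add (h2 t))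
      (fun t ht => by linarith [(abs_le.1 (h3 t ht)).1])
      (by simpa using (k0.const_mul M).add h0) t ht
    linarith
  · have := aux_convex_nonneg (T := T) (g := fun t => M * W t - f t)
      (fun t => ((k1 t).const_mul M).sub (h1 t)) (fun t => ((k2 t).const_mul M).sub (h2 t))
      (fun t ht => by linarith [(abs_le.1 (h3 t ht)).2])
      (by simpa using (k0.const_mul M).sub h0) t ht
    linarith

lemma aux_exp_tendsto {δ : ℝ} (hδ : 0 < δ) :
    Tendsto (fun t : ℝ => Real.exp (δ * t)) atBot (𝓝 0) :=
  Real.tendsto_exp_atBot.comp (tendsto_id.const_mul_atBot hδ)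

lemma aux_exp_deriv (c δ t : ℝ) :
    HasDerivAt (fun t : ℝ => c * Real.exp (δ * t)) (c * δ * Real.exp (δ * t)) t := by
  have := (((hasDerivAt_id t).const_mul δ).exp).const_mul c
  simp only [id] at this
  refine this.congr_deriv ?_
  ring

lemma aux_local {n : ℕ} (A : Matrix (Fin n) (Fin n) ℝ) (hA : ∀ i j, 0 ≤ A i j)
    (v f f1 : Fin n → ℝ → ℝ) (h1 : ∀ i t, HasDerivAt (f i) (f1 i t) t)
    (h2 : ∀ i t, HasDerivAt (f1 i) (-∑ j, A i j * Real.exp (v j t) * f j t) t)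
    (h0 : ∀ i, Tendsto (f i) atBot (𝓝 0))
    (hv : ∀ j, ∃ C δ : ℝ, 0 < δ ∧ ∀ᶠ t in atBot, Real.exp (v j t) ≤ C * Real.exp (δ * t)) :
    ∃ T : ℝ, ∀ t ≤ T, ∀ i, f i t = 0 := by
  choose C δ hδ hv using hv
  set W : Fin n → ℝ → ℝ := fun i t => ∑ j, A i j * C j / (δ j)^2 * Real.exp (δ j * t) with hW
  have W0 : ∀ i, Tendsto (W i) atBot (𝓝 0) := by
    intro i
    have := tendsto_finsetSum (s := Finset.univ) (a := fun _ => (0:ℝ))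
      (f := fun j t => A i j * C j / (δ j)^2 * Real.exp (δ j * t)) (x := atBot)
      (fun j _ => by simpa using (aux_exp_tendsto (hδ j)).const_mul (A i j * C j / (δ j)^2))
    simpa using this
  have ev : ∀ᶠ t in atBot, (∀ j, Real.exp (v j t) ≤ C j * Real.exp (δ j * t)) ∧
      (∀ i, W i t ≤ 1/2) ∧ (∀ i, |f i t| ≤ 1) := by
    refine (eventually_all.2 hv).and ((eventually_all.2 fun i => ?_).and
      (eventually_all.2 fun i => ?_))
    · exact (W0 i).eventually_le_const (by norm_num)
    · have := (h0 i).abs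
      rw [abs_zero] at this
      exact this.eventually_le_const (by norm_num)
  obtain ⟨T, hT⟩ := eventually_atBot.1 ev
  have ind : ∀ k : ℕ, ∀ i, ∀ t ≤ T, |f i t| ≤ (1/2)^k := by
    intro k
    induction k with
    | zero => intro i t ht; simpa using (hT t ht).2.2 i
    | succ k ih =>
      intro i t ht
      have := aux_compare (T := T) (M := (1/2)^k) (W := W i)
        (W1 := fun t => ∑ j, A i j * C j / (δ j)^2 * δ j * Real.exp (δ j * t))
        (W2 := fun t => ∑ j, A i j * C j / (δ j)^2 * δ j * δ j * Real.exp (δ j * t))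
        (h1 i) (h2 i)
        (fun t => HasDerivAt.fun_sum fun j _ => aux_exp_deriv _ _ t)
        (fun t => HasDerivAt.fun_sum fun j _ => aux_exp_deriv _ _ t)
        (by
          intro t ht
          rw [abs_neg, Finset.mul_sum]
          refine (Finset.abs_sum_le_sum_abs _ _).trans (Finset.sum_le_sum fun j _ => ?_)
          have e : A i j * C j / (δ j)^2 * δ j * δ j = A i j * C j := by
            have := (hδ j).ne'
            field_simp
          rw [e, abs_mul, abs_of_nonneg (mul_nonneg (hA i j) (Real.exp_pos _).le)]
          have a1 := ih j t ht.le
          have a2 := (hT t ht.le).1 j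
          calc A i j * Real.exp (v j t) * |f j t|
              ≤ A i j * (C j * Real.exp (δ j * t)) * (1/2)^k := by
                have b := hA i j
                have b2 : 0 ≤ C j * Real.exp (δ j * t) := (Real.exp_pos _).le.trans a2
                gcongr
            _ = _ := by ring)
        (h0 i) (W0 i) t ht
      have hw := (hT t ht).2.1 i
      calc |f i t| ≤ (1/2)^k * W i t := this
        _ ≤ (1/2)^k * (1/2) := by gcongr
        _ = _ := by ring
  refine ⟨T, fun t ht i => ?_⟩
  have l : Tendsto (fun k : ℕ => (1/2 : ℝ)^k) atTop (𝓝 0) :=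
    tendsto_pow_atTop_nhds_zero_of_lt_one (by norm_num) (by norm_num)
  have := ge_of_tendsto' l (fun k => ind k i t ht)
  exact abs_nonpos_iff.1 this

lemma aux_global {n : ℕ} (A : Matrix (Fin n) (Fin n) ℝ)
    (v f f1 : Fin n → ℝ → ℝ) (hvc : ∀ i, Continuous (v i))
    (h1 : ∀ i t, HasDerivAt (f i) (f1 i t) t)
    (h2 : ∀ i t, HasDerivAt (f1 i) (-∑ j, A i j * Real.exp (v j t) * f j t) t)
    (T : ℝ) (hT : ∀ t ≤ T, ∀ i, f i t = 0) : ∀ t i, f i t = 0 := by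
  intro t i
  rcases le_total t T with h | h
  · exact hT t h i
  set x : ℝ → (Fin n → ℝ) × (Fin n → ℝ) := fun t => (fun i => f i t, fun i => f1 i t) with hx
  set x' : ℝ → (Fin n → ℝ) × (Fin n → ℝ) :=
    fun t => (fun i => f1 i t, fun i => -∑ j, A i j * Real.exp (v j t) * f j t) with hx'
  have hd : ∀ t, HasDerivAt x (x' t) t := fun t =>
    (hasDerivAt_pi.2 fun i => h1 i t).prodMk (hasDerivAt_pi.2 fun i => h2 i t)
  have hg : Continuous (fun t => ∑ i, ∑ j, |A i j| * Real.exp (v j t)) := by fun_prop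
  obtain ⟨L, hL⟩ := (isCompact_Icc (a := T - 1) (b := t)).exists_bound_of_continuousOn
    hg.continuousOn
  have z : ∀ i, f1 i (T - 1) = 0 := by
    intro i
    have e : f i =ᶠ[𝓝 (T-1)] fun _ => 0 := by
      filter_upwards [Iio_mem_nhds (by linarith : T - 1 < T)] with s hs using hT s (le_of_lt hs) i
    exact (h1 i (T-1)).unique ((hasDerivAt_const (T-1) (0:ℝ)).congr_of_eventuallyEq e)
  have := eq_zero_of_abs_deriv_le_mul_abs_self_of_eq_zero_right (f := x) (f' := x')
    (K := max 1 L) (a := T - 1) (b := t)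
    (fun s _ => (hd s).continuousAt.continuousWithinAt)
    (fun s _ => (hd s).hasDerivWithinAt)
    (by
      ext i
      · exact hT (T-1) (by linarith) i
      · exact z i)
    (by
      intro s hs
      have hn1 : ∀ i, |f i s| ≤ ‖x s‖ := fun i =>
        (norm_le_pi_norm (x s).1 i).trans (norm_fst_le (x s))
      have hn2 : ∀ i, |f1 i s| ≤ ‖x s‖ := fun i =>
        (norm_le_pi_norm (x s).2 i).trans (norm_snd_le (x s))
      have hp : 0 ≤ ‖x s‖ := norm_nonneg _
      have hm : 0 ≤ max 1 L * ‖x s‖ := mul_nonneg (zero_le_one.trans (le_max_left _ _)) hp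
      rw [Prod.norm_def]
      apply max_le
      · rw [pi_norm_le_iff_of_nonneg hm]
        intro i
        calc ‖(x' s).1 i‖ ≤ 1 * ‖x s‖ := by rw [one_mul]; exact hn2 i
          _ ≤ _ := by gcongr; exact le_max_left _ _
      · rw [pi_norm_le_iff_of_nonneg hm]
        intro i
        have hb := hL s ⟨hs.1, hs.2.le⟩
        calc ‖(x' s).2 i‖ = |∑ j, A i j * Real.exp (v j s) * f j s| := by
              simp [hx', Real.norm_eq_abs]
          _ ≤ ∑ j, |A i j * Real.exp (v j s) * f j s| := Finset.abs_sum_le_sum_abs _ _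
          _ ≤ ∑ j, |A i j| * Real.exp (v j s) * ‖x s‖ := by
              refine Finset.sum_le_sum fun j _ => ?_
              rw [abs_mul, abs_mul, Real.abs_exp]
              gcongr
              exact hn1 j
          _ = (∑ j, |A i j| * Real.exp (v j s)) * ‖x s‖ := by rw [Finset.sum_mul]
          _ ≤ (∑ i, ∑ j, |A i j| * Real.exp (v j s)) * ‖x s‖ := by
              refine mul_le_mul_of_nonneg_right ?_ hp
              exact Finset.single_le_sum (f := fun i => ∑ j, |A i j| * Real.exp (v j s))
                (fun i _ => Finset.sum_nonneg fun j _ => by positivity) (Finset.mem_univ i)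
          _ ≤ max 1 L * ‖x s‖ := by
              gcongr
              exact (le_abs_self _).trans (hb.trans (le_max_right _ _)))
    t ⟨by linarith, le_rfl⟩
  exact congrFun (congrArg Prod.fst this) i

lemma aux_exp_comp {g : ℝ → ℝ} (hg : ∀ r > (0:ℝ), ContDiffAt ℝ 2 g r) (t : ℝ) :
    HasDerivAt (fun t => g (Real.exp t)) (Real.exp t * deriv g (Real.exp t)) t ∧
    HasDerivAt (fun t => Real.exp t * deriv g (Real.exp t))
      (Real.exp t * deriv (fun s => s * deriv g s) (Real.exp t)) t ∧
    deriv (fun s => s * deriv g s) (Real.exp t) =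
      deriv g (Real.exp t) + Real.exp t * deriv (deriv g) (Real.exp t) := by
  have hp := Real.exp_pos t
  have c := hg _ hp
  have d1 : HasDerivAt g (deriv g (Real.exp t)) (Real.exp t) :=
    (c.differentiableAt (by norm_num)).hasDerivAt
  have d2 : HasDerivAt (deriv g) (deriv (deriv g) (Real.exp t)) (Real.exp t) :=
    ((c.derivWithin (m := 1) (by norm_num)).differentiableAt (by norm_num)).hasDerivAt
  have d3 := (hasDerivAt_id (Real.exp t)).mul d2
  have d4 : HasDerivAt (fun s => s * deriv g s)
    (deriv g (Real.exp t) + Real.exp t * deriv (deriv g) (Real.exp t)) (Real.exp t) := by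
    refine d3.congr_deriv ?_
    simp
  refine ⟨?_, ?_, d4.deriv⟩
  · have := d1.comp t (Real.hasDerivAt_exp t)
    rw [mul_comm]; exact this
  · have := d4.comp t (Real.hasDerivAt_exp t)
    rw [d4.deriv, mul_comm]; exact this

lemma aux_decay {v v1 v2 : ℝ → ℝ} (h1 : ∀ t, HasDerivAt v (v1 t) t)
    (h2 : ∀ t, HasDerivAt v1 (v2 t) t) (h3 : ∀ t, v2 t ≤ 0)
    (henergy : IntegrableOn (fun r : ℝ => r⁻¹ * Real.exp (v (Real.log r))) (Ioi 0)) :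
    ∃ C δ : ℝ, 0 < δ ∧ ∀ᶠ t in atBot, Real.exp (v t) ≤ C * Real.exp (δ * t) := by
  have hc : ConcaveOn ℝ univ v :=
    concaveOn_of_hasDerivWithinAt2_nonpos (f' := v1) (f'' := v2) convex_univ
      (fun t _ => (h1 t).continuousAt.continuousWithinAt)
      (fun t _ => (h1 t).hasDerivWithinAt) (fun t _ => (h2 t).hasDerivWithinAt)
      (fun t _ => h3 t)
  have : ∃ a b, a < b ∧ v a < v b := by
    by_contra! hcon
    have hi : IntegrableOn (fun r : ℝ => r⁻¹) (Ioc 0 1) := by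
      have h4 := (henergy.mono_set (show Ioc (0:ℝ) 1 ⊆ Ioi 0 from Ioc_subset_Ioi_self)).const_mul
        (Real.exp (-(v 0)))
      refine h4.mono' (by fun_prop) ?_
      refine (ae_restrict_mem measurableSet_Ioc).mono fun r hr => ?_
      have hr0 : 0 < r := hr.1
      have hle : v 0 ≤ v (Real.log r) := by
        rcases (Real.log_nonpos hr.1.le hr.2).eq_or_lt with h | h
        · rw [h]
        · exact hcon _ _ h
      rw [Real.norm_eq_abs, abs_of_pos (inv_pos.2 hr0)]
      have : 1 ≤ Real.exp (-(v 0)) * Real.exp (v (Real.log r)) := by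
        rw [← Real.exp_add]; exact Real.one_le_exp (by linarith)
      calc r⁻¹ = r⁻¹ * 1 := by ring
        _ ≤ r⁻¹ * (Real.exp (-(v 0)) * Real.exp (v (Real.log r))) := by gcongr
        _ = _ := by ring
    rw [← intervalIntegrable_iff_integrableOn_Ioc_of_le zero_le_one,
      intervalIntegrable_inv_iff] at hi
    simp at hi
  obtain ⟨a, b, hab, hv⟩ := this
  set δ := (v b - v a) / (b - a) with hδ
  have hδ0 : 0 < δ := div_pos (by linarith) (by linarith)
  refine ⟨Real.exp (v a - δ * a), δ, hδ0, ?_⟩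
  filter_upwards [eventually_lt_atBot a] with t ht
  rw [← Real.exp_add]
  apply Real.exp_le_exp.2
  have := hc.slope_anti_adjacent (mem_univ t) (mem_univ b) ht hab
  rw [← hδ, le_div_iff₀ (by linarith)] at this
  linarith

theorem linearized_solution_vanishing_initial_data_is_zero {n : ℕ} (hn : 0 < n)
    (A : Matrix (Fin n) (Fin n) ℝ) (β : Fin n → ℝ)
    (hA : H1 A) (hβ : ∀ i, -2 < β i)
    (u : Fin n → ℝ → ℝ) (hu : RadialSolution A β u)
    (φ : Fin n → ℝ → ℝ) (hφ : LinearizedSolution A β u φ)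
    (hφ0cont : ∀ i, ContinuousWithinAt (φ i) (Set.Ici 0) 0)
    (hφ0 : ∀ i, φ i 0 = 0) :
    ∀ i, ∀ r ≥ (0:ℝ), φ i r = 0 := by
  obtain ⟨-, hA0, -, -⟩ := hA
  obtain ⟨hu1, hu2, hu3⟩ := hu
  obtain ⟨hφ1, hφ2⟩ := hφ
  set v : Fin n → ℝ → ℝ := fun i t => u i (Real.exp t) + (β i + 2) * t with hv
  have hve : ∀ j t, Real.exp (v j t) =
      Real.exp t * (Real.exp t ^ (β j + 1) * Real.exp (u j (Real.exp t))) := by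
    intro j t
    simp only [hv]
    rw [← Real.exp_mul, ← Real.exp_add, ← Real.exp_add]
    congr 1
    ring
  have hv1 : ∀ i t, HasDerivAt (v i)
      (Real.exp t * deriv (u i) (Real.exp t) + (β i + 2)) t := by
    intro i t
    have := (aux_exp_comp (hu1 i) t).1.add ((hasDerivAt_id t).const_mul (β i + 2))
    rw [mul_one] at this
    exact this
  have hv2 : ∀ i t, HasDerivAt (fun t => Real.exp t * deriv (u i) (Real.exp t) + (β i + 2))
      (-∑ j, A i j * Real.exp (v j t)) t := by
    intro i t
    have h := (aux_exp_comp (hu1 i) t).2.1.add_const (β i + 2)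
    refine h.congr_deriv ?_
    rw [(aux_exp_comp (hu1 i) t).2.2]
    have hp := Real.exp_pos t
    have e := hu2 i _ hp
    have e2 : ∑ j, A i j * Real.exp (v j t) = Real.exp t * Real.exp t *
        ∑ j, A i j * Real.exp t ^ β j * Real.exp (u j (Real.exp t)) := by
      rw [Finset.mul_sum]
      refine Finset.sum_congr rfl fun j _ => ?_
      rw [hve, Real.rpow_add hp, Real.rpow_one]
      ring
    rw [e2]
    have e3 : ∑ j, A i j * Real.exp t ^ β j * Real.exp (u j (Real.exp t)) =
        -(deriv (deriv (u i)) (Real.exp t) + (1 / Real.exp t) * deriv (u i) (Real.exp t)) := by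
      linarith
    rw [e3]
    field_simp
    ring
  have hdec : ∀ j, ∃ C δ : ℝ, 0 < δ ∧
      ∀ᶠ t in atBot, Real.exp (v j t) ≤ C * Real.exp (δ * t) := by
    intro j
    refine aux_decay (hv1 j) (hv2 j) (fun t => ?_) ?_
    · exact neg_nonpos.2 (Finset.sum_nonneg fun k _ =>
        mul_nonneg (hA0 j k) (Real.exp_pos _).le)
    · refine (hu3 j).congr_fun (fun r hr => ?_) measurableSet_Ioi
      have hr0 : 0 < r := hr
      simp only
      rw [hve, Real.exp_log hr0, inv_mul_cancel_left₀ hr0.ne']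
  set f : Fin n → ℝ → ℝ := fun i t => φ i (Real.exp t) with hf
  have h1 : ∀ i t, HasDerivAt (f i) (Real.exp t * deriv (φ i) (Real.exp t)) t :=
    fun i t => (aux_exp_comp (hφ1 i) t).1
  have h2 : ∀ i t, HasDerivAt (fun t => Real.exp t * deriv (φ i) (Real.exp t))
      (-∑ j, A i j * Real.exp (v j t) * f j t) t := by
    intro i t
    refine (aux_exp_comp (hφ1 i) t).2.1.congr_deriv ?_
    rw [eq_neg_of_add_eq_zero_left (hφ2 i _ (Real.exp_pos t)), mul_neg, Finset.mul_sum]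
    congr 1
    refine Finset.sum_congr rfl fun j _ => ?_
    rw [hve]
    ring
  have h0 : ∀ i, Tendsto (f i) atBot (𝓝 0) := by
    intro i
    have hc := hφ0cont i
    rw [ContinuousWithinAt, hφ0 i] at hc
    refine hc.comp (tendsto_nhdsWithin_iff.2 ⟨Real.tendsto_exp_atBot, ?_⟩)
    exact Eventually.of_forall fun t => (Real.exp_pos t).le
  obtain ⟨T, hT⟩ := aux_local A hA0 v f _ h1 h2 h0 hdec
  have hvc : ∀ i, Continuous (v i) := fun i =>
    continuous_iff_continuousAt.2 fun t => (hv1 i t).continuousAt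
  have hall := aux_global A v f _ hvc h1 h2 T hT
  intro i r hr
  rcases hr.eq_or_lt with h | h
  · rw [← h]; exact hφ0 i
  · have := hall (Real.log r) i
    simp only [hf] at this
    rwa [Real.exp_log h] at this
end

section
/- Let A satisfy (H1), β_i > -2 for all i ∈ I, and let u be a finite-energy radial solution of the singular Liouville system. If φ = (φ_1,...,φ_n) is a bounded solution of the linearized system (r φ_i'(r))' + Σ_{j=1}^n a_{ij} r^{β_j+1} e^{u_j(r)} φ_j(r) = 0 for r > 0, then there exists a constant C ∈ ℝ such that φ_i(r) = C (r u_i'(r) + 2 + β_i) for all r > 0 and all i ∈ I. -/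
open Set MeasureTheory

open Filter Topology

/-- The system in the logarithmic variable `t = log r`, together with its linearization. -/
structure LogSys {n : ℕ} (A : Matrix (Fin n) (Fin n) ℝ) (V W ψ P : Fin n → ℝ → ℝ) (M : ℝ) :
    Prop where
  hV : ∀ i t, HasDerivAt (V i) (W i t) t
  hW : ∀ i t, HasDerivAt (W i) (-∑ j, A i j * Real.exp (V j t)) t
  hψ : ∀ i t, HasDerivAt (ψ i) (P i t) t
  hP : ∀ i t, HasDerivAt (P i) (-∑ j, A i j * (Real.exp (V j t) * ψ j t)) t
  hint : ∀ i, Integrable (fun t => Real.exp (V i t))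
  hbd : ∀ i t, |ψ i t| ≤ M

lemma LogSys.reflect {n : ℕ} {A : Matrix (Fin n) (Fin n) ℝ} {V W ψ P : Fin n → ℝ → ℝ} {M : ℝ}
    (h : LogSys A V W ψ P M) :
    LogSys A (fun i t => V i (-t)) (fun i t => -W i (-t)) (fun i t => ψ i (-t))
      (fun i t => -P i (-t)) M where
  hV i t := by
    have := (h.hV i (-t)).comp t (hasDerivAt_neg t)
    simpa [Function.comp_def] using this
  hW i t := by
    have := ((h.hW i (-t)).comp t (hasDerivAt_neg t)).neg
    refine this.congr_deriv ?_
    ring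
  hψ i t := by
    have := (h.hψ i (-t)).comp t (hasDerivAt_neg t)
    simpa [Function.comp_def] using this
  hP i t := by
    have := ((h.hP i (-t)).comp t (hasDerivAt_neg t)).neg
    refine this.congr_deriv ?_
    ring
  hint i := (h.hint i).comp_neg
  hbd i t := h.hbd i (-t)

lemma LogSys.W_anti {n : ℕ} {A : Matrix (Fin n) (Fin n) ℝ} {V W ψ P : Fin n → ℝ → ℝ} {M : ℝ}
    (h : LogSys A V W ψ P M) (hA : ∀ i j, 0 ≤ A i j) (i : Fin n) : Antitone (W i) := by
  refine antitone_of_hasDerivAt_nonpos (h.hW i) (fun t => ?_)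
  have : 0 ≤ ∑ j, A i j * Real.exp (V j t) :=
    Finset.sum_nonneg fun j _ => mul_nonneg (hA i j) (Real.exp_pos _).le
  simpa using this

lemma LogSys.exists_neg {n : ℕ} {A : Matrix (Fin n) (Fin n) ℝ} {V W ψ P : Fin n → ℝ → ℝ} {M : ℝ}
    (h : LogSys A V W ψ P M) (i : Fin n) : ∃ T, W i T < 0 := by
  by_contra! hc
  have hm : Monotone (V i) := monotone_of_hasDerivAt_nonneg (h.hV i) hc
  have h1 : IntegrableOn (fun _ : ℝ => Real.exp (V i 0)) (Ioi 0) := by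
    refine Integrable.mono' (h.hint i).integrableOn (by fun_prop) ?_
    refine (ae_restrict_iff' measurableSet_Ioi).2 (Eventually.of_forall fun t ht => ?_)
    rw [Real.norm_eq_abs, abs_of_pos (Real.exp_pos _)]
    exact Real.exp_le_exp.2 (hm (le_of_lt ht))
  rw [integrableOn_const_iff] at h1
  simp at h1

lemma LogSys.exp_tendsto {n : ℕ} {A : Matrix (Fin n) (Fin n) ℝ} {V W ψ P : Fin n → ℝ → ℝ} {M : ℝ}
    (h : LogSys A V W ψ P M) (hA : ∀ i j, 0 ≤ A i j) (i : Fin n) :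
    Tendsto (fun t => Real.exp (V i t)) atTop (𝓝 0) := by
  obtain ⟨T, hT⟩ := h.exists_neg i
  refine Real.tendsto_exp_atBot.comp ?_
  have hlin : Tendsto (fun t => V i T + W i T * (t - T)) atTop atBot := by
    refine tendsto_atBot_add_const_left _ _ ?_
    exact Tendsto.const_mul_atTop_of_neg hT (tendsto_atTop_add_const_right _ _ tendsto_id)
  refine tendsto_atBot_mono' _ ?_ hlin
  filter_upwards [eventually_gt_atTop T] with t ht
  obtain ⟨c, hc, hce⟩ := exists_hasDerivAt_eq_slope (V i) (W i) ht
    (fun x _ => (h.hV i x).continuousAt.continuousWithinAt) (fun x _ => h.hV i x)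
  have h1 : W i c ≤ W i T := h.W_anti hA i hc.1.le
  rw [hce, div_le_iff₀ (by linarith)] at h1
  linarith

lemma LogSys.W_tendsto {n : ℕ} {A : Matrix (Fin n) (Fin n) ℝ} {V W ψ P : Fin n → ℝ → ℝ} {M : ℝ}
    (h : LogSys A V W ψ P M) (i : Fin n) :
    ∃ l, Tendsto (W i) atTop (𝓝 l) := by
  refine ⟨_, tendsto_limUnder_of_hasDerivAt_of_integrableOn_Ioi (a := 0)
    (fun t _ => h.hW i t) ?_⟩
  refine Integrable.integrableOn ?_
  exact (integrable_finsetSum _ fun j _ => (h.hint j).const_mul _).neg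

lemma LogSys.P_tendsto {n : ℕ} {A : Matrix (Fin n) (Fin n) ℝ} {V W ψ P : Fin n → ℝ → ℝ} {M : ℝ}
    (h : LogSys A V W ψ P M) (i : Fin n) : Tendsto (P i) atTop (𝓝 0) := by
  have hψc : ∀ j, Continuous (ψ j) := fun j =>
    continuous_iff_continuousAt.2 fun t => (h.hψ j t).continuousAt
  have hl : ∃ l, Tendsto (P i) atTop (𝓝 l) := by
    refine ⟨_, tendsto_limUnder_of_hasDerivAt_of_integrableOn_Ioi (a := 0)
      (fun t _ => h.hP i t) ?_⟩
    refine Integrable.integrableOn ?_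
    refine (integrable_finsetSum _ fun j _ => Integrable.const_mul ?_ _).neg
    exact (h.hint j).mul_bdd (c := M) (hψc j).aestronglyMeasurable
      (Eventually.of_forall fun t => h.hbd j t)
  obtain ⟨l, hl⟩ := hl
  have hex : ∀ t : ℝ, ∃ s, 0 < t → (t < s ∧ |P i s| ≤ 2 * M / t) := by
    intro t
    by_cases ht : 0 < t
    · obtain ⟨c, hc, hce⟩ := exists_hasDerivAt_eq_slope (ψ i) (P i) (show t < 2 * t by linarith)
        (hψc i).continuousOn (fun x _ => h.hψ i x)
      refine ⟨c, fun _ => ⟨hc.1, ?_⟩⟩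
      rw [hce, show 2 * t - t = t by ring, abs_div, abs_of_pos ht]
      gcongr
      have h1 := h.hbd i t
      have h2 := h.hbd i (2 * t)
      rw [abs_le] at *
      constructor <;> linarith
    · exact ⟨0, fun h => absurd h ht⟩
  choose s hs using hex
  have hst : Tendsto s atTop atTop := by
    refine tendsto_atTop_mono' _ ?_ tendsto_id
    filter_upwards [eventually_gt_atTop 0] with t ht using (hs t ht).1.le
  have h1 : Tendsto (fun t => P i (s t)) atTop (𝓝 0) := by
    refine squeeze_zero_norm' (a := fun t => 2 * M / t) ?_ (tendsto_id.const_div_atTop _)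
    filter_upwards [eventually_gt_atTop 0] with t ht using (hs t ht).2
  have := tendsto_nhds_unique (hl.comp hst) h1
  rwa [this] at hl

/-- `f` is bounded by a multiple of `exp V` near infinity. -/
lemma LogSys.f_bound {n : ℕ} {A : Matrix (Fin n) (Fin n) ℝ} {V W ψ P : Fin n → ℝ → ℝ} {M : ℝ}
    (h : LogSys A V W ψ P M) (hA : ∀ i j, 0 ≤ A i j) (i : Fin n) (f : ℝ → ℝ)
    (hf : ∀ t, HasDerivAt f (Real.exp (V i t) * ψ i t) t) (hf0 : Tendsto f atTop (𝓝 0)) :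
    ∃ K, ∀ᶠ t in atTop, |f t * Real.exp (-V i t)| ≤ K := by
  obtain ⟨T, hT⟩ := h.exists_neg i
  have hE : ∀ t, HasDerivAt (fun t => Real.exp (V i t)) (Real.exp (V i t) * W i t) t :=
    fun t => (h.hV i t).exp
  have hE0 := h.exp_tendsto hA i
  have hM : 0 ≤ M := (abs_nonneg _).trans (h.hbd i 0)
  set K := M / (-W i T) with hK
  have hKW : ∀ t, T ≤ t → M ≤ -(K * W i t) := by
    intro t ht
    have h1 : W i t ≤ W i T := h.W_anti hA i ht
    have h2 : 0 ≤ K := div_nonneg hM (by linarith)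
    have h3 : K * (-W i T) = M := div_mul_cancel₀ _ (by linarith)
    nlinarith
  refine ⟨K, ?_⟩
  have key : ∀ g : ℝ → ℝ, ∀ g' : ℝ → ℝ, (∀ t, HasDerivAt g (g' t) t) →
      (∀ t, T ≤ t → g' t ≤ 0) → Tendsto g atTop (𝓝 0) → ∀ t, T ≤ t → 0 ≤ g t := by
    intro g g' hg hg' hg0 t ht
    have hanti : AntitoneOn g (Ici T) := by
      refine antitoneOn_of_hasDerivWithinAt_nonpos (f' := g') (convex_Ici T)
        (fun x _ => (hg x).continuousAt.continuousWithinAt)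
        (fun x _ => (hg x).hasDerivWithinAt) ?_
      intro x hx
      rw [interior_Ici] at hx
      exact hg' x (le_of_lt hx)
    refine le_of_tendsto hg0 ?_
    filter_upwards [eventually_ge_atTop t] with s hs
    exact hanti ht (ht.trans hs : T ≤ s) hs
  filter_upwards [eventually_ge_atTop T] with t ht
  have k1 := key (fun t => K * Real.exp (V i t) - f t) _ (fun t => ((hE t).const_mul K).sub (hf t))
    (fun t ht => by
      have h1 := hKW t ht
      have h2 := abs_le.1 (h.hbd i t)
      have h3 := Real.exp_pos (V i t)
      nlinarith) (by simpa using (hE0.const_mul K).sub hf0) t ht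
  have k2 := key (fun t => K * Real.exp (V i t) + f t) _ (fun t => ((hE t).const_mul K).add (hf t))
    (fun t ht => by
      have h1 := hKW t ht
      have h2 := abs_le.1 (h.hbd i t)
      have h3 := Real.exp_pos (V i t)
      nlinarith) (by simpa using (hE0.const_mul K).add hf0) t ht
  rw [abs_mul, abs_of_pos (Real.exp_pos _), Real.exp_neg, ← div_eq_mul_inv,
    div_le_iff₀ (Real.exp_pos _), abs_le]
  constructor <;> linarith

lemma LogSys.Q_tendsto {n : ℕ} {A : Matrix (Fin n) (Fin n) ℝ} {V W ψ P : Fin n → ℝ → ℝ} {M : ℝ}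
    (h : LogSys A V W ψ P M) (hA : ∀ i j, 0 ≤ A i j) (f : Fin n → ℝ → ℝ)
    (hf : ∀ i t, HasDerivAt (f i) (Real.exp (V i t) * ψ i t) t)
    (hfP : ∀ i, ∃ b : Fin n → ℝ, ∀ t, f i t = ∑ j, b j * P j t) :
    Tendsto (fun t => ∑ i, f i t * (ψ i t - f i t * Real.exp (-V i t) * W i t)) atTop (𝓝 0) := by
  rw [show (0:ℝ) = ∑ i : Fin n, 0 by simp]
  refine tendsto_finsetSum _ fun i _ => ?_
  have hf0 : Tendsto (f i) atTop (𝓝 0) := by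
    obtain ⟨b, hb⟩ := hfP i
    rw [show f i = fun t => ∑ j, b j * P j t from funext hb]
    rw [show (0:ℝ) = ∑ j : Fin n, b j * 0 by simp]
    exact tendsto_finsetSum _ fun j _ => (h.P_tendsto j).const_mul _
  obtain ⟨K, hK⟩ := h.f_bound hA i (f i) (hf i) hf0
  obtain ⟨l, hl⟩ := h.W_tendsto i
  have hWb : ∀ᶠ t in atTop, |W i t| ≤ |l| + 1 :=
    (hl.abs.eventually (gt_mem_nhds (lt_add_one |l|))).mono fun t ht => le_of_lt ht
  refine squeeze_zero_norm' (a := fun t => |f i t| * (M + K * (|l| + 1))) ?_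
    (by simpa using hf0.abs.mul_const (M + K * (|l| + 1)))
  filter_upwards [hK, hWb] with t h1 h2
  rw [Real.norm_eq_abs, abs_mul]
  gcongr
  refine (abs_sub _ _).trans ?_
  rw [abs_mul (_ * _)]
  gcongr
  · exact h.hbd i t
  · exact (abs_nonneg _).trans h1

lemma LogSys.main {n : ℕ} (hn : 0 < n) {A : Matrix (Fin n) (Fin n) ℝ} (hA : H1 A)
    {V W ψ P : Fin n → ℝ → ℝ} {M : ℝ} (h : LogSys A V W ψ P M) :
    ∃ C, ∀ i t, ψ i t = C * W i t := by
  obtain ⟨hsym, hnn, hirr, hdet⟩ := hA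
  have hs : ∀ i j, A i j = A j i := fun i j => hsym.apply j i
  set f : Fin n → ℝ → ℝ := fun i t => ∑ j, (-A⁻¹ i j) * P j t with hfdef
  have hf : ∀ i t, HasDerivAt (f i) (Real.exp (V i t) * ψ i t) t := by
    intro i t
    have h1 : HasDerivAt (f i) (∑ j, (-A⁻¹ i j) * (-∑ k, A j k * (Real.exp (V k t) * ψ k t))) t :=
      HasDerivAt.fun_sum fun j _ => (h.hP j t).const_mul _
    refine h1.congr_deriv ?_
    have h2 : (A⁻¹).mulVec (A.mulVec (fun k => Real.exp (V k t) * ψ k t)) i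
        = Real.exp (V i t) * ψ i t := by
      rw [Matrix.mulVec_mulVec, Matrix.nonsing_inv_mul _ hdet, Matrix.one_mulVec]
    rw [← h2]
    simp [Matrix.mulVec, dotProduct]
  have hPf : ∀ i t, P i t = -∑ j, A i j * f j t := by
    intro i t
    have h2 : A.mulVec ((A⁻¹).mulVec (fun k => P k t)) i = P i t := by
      rw [Matrix.mulVec_mulVec, Matrix.mul_nonsing_inv _ hdet, Matrix.one_mulVec]
    rw [← h2]
    simp [Matrix.mulVec, dotProduct, hfdef]
  set g : Fin n → ℝ → ℝ := fun i t => f i t * Real.exp (-V i t) with hgdef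
  have hfg : ∀ i t, f i t = Real.exp (V i t) * g i t := by
    intro i t
    simp only [hgdef]
    rw [mul_left_comm, ← Real.exp_add]
    simp
  have hg : ∀ i t, HasDerivAt (g i) (ψ i t - g i t * W i t) t := by
    intro i t
    refine ((hf i t).mul (h.hV i t).neg.exp).congr_deriv ?_
    have : Real.exp (V i t) * Real.exp (-V i t) = 1 := by rw [← Real.exp_add]; simp
    simp only [hgdef, Pi.neg_apply]
    linear_combination ψ i t * this
  set Q : ℝ → ℝ := fun t => ∑ i, f i t * (ψ i t - g i t * W i t) with hQdef
  set R : ℝ → ℝ := fun t => ∑ i, Real.exp (V i t) * (ψ i t - g i t * W i t) ^ 2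
    + (1 / 2) * ∑ i, ∑ j, A i j * Real.exp (V i t) * Real.exp (V j t) * (g i t - g j t) ^ 2
    with hRdef
  have hQ : ∀ t, HasDerivAt Q (R t) t := by
    intro t
    have h1 : HasDerivAt Q (∑ i, (Real.exp (V i t) * ψ i t * (ψ i t - g i t * W i t) +
        f i t * (P i t - ((ψ i t - g i t * W i t) * W i t
          + g i t * (-∑ j, A i j * Real.exp (V j t)))))) t :=
      HasDerivAt.fun_sum fun i _ => (hf i t).mul ((h.hψ i t).sub ((hg i t).mul (h.hW i t)))
    refine h1.congr_deriv ?_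
    have hsw : ∑ i, ∑ j, A i j * Real.exp (V i t) * Real.exp (V j t) * (g j t * (g j t - g i t))
        = ∑ i, ∑ j, A i j * Real.exp (V i t) * Real.exp (V j t) * (g i t * (g i t - g j t)) := by
      rw [Finset.sum_comm]
      refine Finset.sum_congr rfl fun i _ => Finset.sum_congr rfl fun j _ => ?_
      rw [hs j i]; ring
    have hsq : (1 / 2 : ℝ) * ∑ i, ∑ j, A i j * Real.exp (V i t) * Real.exp (V j t)
          * (g i t - g j t) ^ 2
        = ∑ i, ∑ j, A i j * Real.exp (V i t) * Real.exp (V j t) * (g i t * (g i t - g j t)) := by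
      have : ∑ i, ∑ j, A i j * Real.exp (V i t) * Real.exp (V j t) * (g i t - g j t) ^ 2
        = ∑ i, ∑ j, A i j * Real.exp (V i t) * Real.exp (V j t) * (g i t * (g i t - g j t))
        + ∑ i, ∑ j, A i j * Real.exp (V i t) * Real.exp (V j t) * (g j t * (g j t - g i t)) := by
        simp only [← Finset.sum_add_distrib]
        refine Finset.sum_congr rfl fun i _ => Finset.sum_congr rfl fun j _ => ?_
        ring
      rw [this, hsw]; ring
    simp only [hRdef]
    rw [hsq, ← Finset.sum_add_distrib]
    refine Finset.sum_congr rfl fun i _ => ?_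
    have e1 : ∑ j, A i j * Real.exp (V i t) * Real.exp (V j t) * (g i t * (g i t - g j t))
        = Real.exp (V i t) * g i t * (g i t * ∑ j, A i j * Real.exp (V j t)
          - ∑ j, A i j * f j t) := by
      rw [Finset.mul_sum, ← Finset.sum_sub_distrib, Finset.mul_sum]
      refine Finset.sum_congr rfl fun j _ => ?_
      rw [hfg j]; ring
    rw [e1, hPf i t, hfg i t]
    ring
  have hR1 : ∀ t i, 0 ≤ Real.exp (V i t) * (ψ i t - g i t * W i t) ^ 2 := fun t i => by positivity
  have hR2 : ∀ t i j, 0 ≤ A i j * Real.exp (V i t) * Real.exp (V j t) * (g i t - g j t) ^ 2 :=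
    fun t i j => by have := hnn i j; positivity
  have hR2' : ∀ t i, 0 ≤ ∑ j, A i j * Real.exp (V i t) * Real.exp (V j t) * (g i t - g j t) ^ 2 :=
    fun t i => Finset.sum_nonneg fun j _ => hR2 t i j
  have hRa : ∀ t, 0 ≤ ∑ i, Real.exp (V i t) * (ψ i t - g i t * W i t) ^ 2 :=
    fun t => Finset.sum_nonneg fun i _ => hR1 t i
  have hRb : ∀ t, 0 ≤ ∑ i, ∑ j, A i j * Real.exp (V i t) * Real.exp (V j t)
      * (g i t - g j t) ^ 2 := fun t => Finset.sum_nonneg fun i _ => hR2' t i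
  have hmono : Monotone Q := by
    refine monotone_of_hasDerivAt_nonneg hQ (fun t => ?_)
    have := hRa t
    have := hRb t
    simp only [hRdef, Pi.zero_apply]
    linarith
  have htop : Tendsto Q atTop (𝓝 0) :=
    h.Q_tendsto hnn f hf (fun i => ⟨fun j => -A⁻¹ i j, fun t => rfl⟩)
  have hbot : Tendsto Q atBot (𝓝 0) := by
    have h1 := h.reflect.Q_tendsto hnn (fun i t => -f i (-t))
      (fun i t => by
        have := ((hf i (-t)).comp t (hasDerivAt_neg t)).neg
        refine this.congr_deriv ?_
        ring)
      (fun i => ⟨fun j => -A⁻¹ i j, fun t => by simp [hfdef]⟩)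
    have h2 := (h1.comp tendsto_neg_atBot_atTop).neg
    rw [neg_zero] at h2
    refine h2.congr fun t => ?_
    simp only [Function.comp, neg_neg, hQdef, hgdef]
    rw [← Finset.sum_neg_distrib]
    refine Finset.sum_congr rfl fun i _ => ?_
    ring
  have hQ0 : Q = fun _ => 0 := by
    funext t
    exact le_antisymm (hmono.ge_of_tendsto htop t) (hmono.le_of_tendsto hbot t)
  have hR0 : ∀ t, R t = 0 := by
    intro t
    have h1 := hQ t
    rw [hQ0] at h1
    exact h1.unique (hasDerivAt_const t 0)
  have hz1 : ∀ i t, ψ i t = g i t * W i t := by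
    intro i t
    have h0 := hR0 t
    simp only [hRdef] at h0
    have h1 : ∑ i, Real.exp (V i t) * (ψ i t - g i t * W i t) ^ 2 = 0 := by
      linarith [hRa t, hRb t]
    have h2 := (Finset.sum_eq_zero_iff_of_nonneg (fun i _ => hR1 t i)).1 h1 i (Finset.mem_univ _)
    have h3 := (mul_eq_zero.1 h2).resolve_left (Real.exp_ne_zero _)
    linarith [pow_eq_zero_iff (two_ne_zero) |>.1 h3]
  have hz2 : ∀ i j t, A i j ≠ 0 → g i t = g j t := by
    intro i j t hij
    have h0 := hR0 t
    simp only [hRdef] at h0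
    have h1 : ∑ i, ∑ j, A i j * Real.exp (V i t) * Real.exp (V j t)
      * (g i t - g j t) ^ 2 = 0 := by
      linarith [hRa t, hRb t]
    have h2 := (Finset.sum_eq_zero_iff_of_nonneg (fun i _ => hR2' t i)).1 h1 i (Finset.mem_univ _)
    have h3 := (Finset.sum_eq_zero_iff_of_nonneg (fun j _ => hR2 t i j)).1 h2 j (Finset.mem_univ _)
    have h4 := (mul_eq_zero.1 h3).resolve_left
      (mul_ne_zero (mul_ne_zero hij (Real.exp_ne_zero _)) (Real.exp_ne_zero _))
    linarith [pow_eq_zero_iff (two_ne_zero) |>.1 h4]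
  have hconst : ∀ i t, g i t = g i 0 := by
    intro i t
    refine is_const_of_deriv_eq_zero (fun t => (hg i t).differentiableAt) (fun t => ?_) t 0
    rw [(hg i t).deriv, hz1 i t, sub_self]
  let i0 : Fin n := ⟨0, hn⟩
  have hall : ∀ i, g i 0 = g i0 0 := by
    by_contra! hc
    obtain ⟨k, hk⟩ := hc
    let S : Finset (Fin n) := Finset.univ.filter fun i => g i 0 = g i0 0
    obtain ⟨i, hi, j, hj, hij⟩ := hirr S ⟨i0, by simp [S]⟩ (fun hS => by
      have : k ∈ S := hS ▸ Finset.mem_univ k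
      simp [S] at this
      exact hk this)
    simp [S] at hi hj
    exact hj ((hz2 i j 0 hij).symm.trans hi)
  exact ⟨g i0 0, fun i t => by rw [hz1 i t, hconst i t, hall i]⟩

theorem bounded_linearized_solutions_are_multiples {n : ℕ} (hn : 0 < n)
    (A : Matrix (Fin n) (Fin n) ℝ) (β : Fin n → ℝ)
    (hA : H1 A) (hβ : ∀ i, -2 < β i)
    (u : Fin n → ℝ → ℝ) (hu : RadialSolution A β u)
    (φ : Fin n → ℝ → ℝ) (hφ : LinearizedSolution A β u φ)
    (hφbd : ∃ M : ℝ, ∀ i, ∀ r > (0:ℝ), |φ i r| ≤ M) :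
    ∃ C : ℝ, ∀ i, ∀ r > (0:ℝ), φ i r = C * (r * deriv (u i) r + 2 + β i) := by
  obtain ⟨M, hM⟩ := hφbd
  obtain ⟨hu1, hu2, hu3⟩ := hu
  obtain ⟨hφ1, hφ2⟩ := hφ
  have hd1 : ∀ v : ℝ → ℝ, ∀ r, ContDiffAt ℝ 2 v r → HasDerivAt v (deriv v r) r :=
    fun v r hv => (hv.differentiableAt (by norm_num)).hasDerivAt
  have hd2 : ∀ v : ℝ → ℝ, ∀ r, ContDiffAt ℝ 2 v r →
      HasDerivAt (deriv v) (deriv (deriv v) r) r := by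
    intro v r hv
    have h1 : ContDiffAt ℝ 1 (fderiv ℝ v) r := hv.fderiv_right (by norm_num)
    have h2 : DifferentiableAt ℝ (fun s => fderiv ℝ v s 1) r :=
      (h1.differentiableAt (by norm_num)).clm_apply (differentiableAt_const _)
    have h3 : deriv v = fun s => fderiv ℝ v s 1 := by
      funext s
      exact fderiv_apply_one_eq_deriv.symm
    rw [← h3] at h2
    exact h2.hasDerivAt
  have hE : ∀ i t, Real.exp (u i (Real.exp t) + (2 + β i) * t)
      = Real.exp t * (Real.exp t ^ (β i + 1) * Real.exp (u i (Real.exp t))) := by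
    intro i t
    rw [← Real.exp_mul, ← Real.exp_add, ← Real.exp_add]
    congr 1; ring
  have hsys : LogSys A (fun i t => u i (Real.exp t) + (2 + β i) * t)
      (fun i t => Real.exp t * deriv (u i) (Real.exp t) + (2 + β i))
      (fun i t => φ i (Real.exp t))
      (fun i t => Real.exp t * deriv (φ i) (Real.exp t)) M := by
    refine ⟨?_, ?_, ?_, ?_, ?_, ?_⟩
    · intro i t
      refine (((hd1 _ _ (hu1 i _ (Real.exp_pos t))).comp t (Real.hasDerivAt_exp t)).add
        ((hasDerivAt_id t).const_mul (2 + β i))).congr_deriv ?_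
      ring
    · intro i t
      refine (((Real.hasDerivAt_exp t).mul
        ((hd2 _ _ (hu1 i _ (Real.exp_pos t))).comp t (Real.hasDerivAt_exp t))).add_const
        (2 + β i)).congr_deriv ?_
      have h1 := hu2 i _ (Real.exp_pos t)
      have h2 : ∑ j, A i j * Real.exp (u j (Real.exp t) + (2 + β j) * t)
          = Real.exp t ^ 2 * ∑ j, A i j * Real.exp t ^ β j * Real.exp (u j (Real.exp t)) := by
        rw [Finset.mul_sum]
        refine Finset.sum_congr rfl fun j _ => ?_
        rw [hE, Real.rpow_add_one (Real.exp_ne_zero t)]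
        ring
      rw [h2]
      have h3 : Real.exp t * (1 / Real.exp t) = 1 := by field_simp
      simp only [Function.comp]
      linear_combination Real.exp t ^ 2 * h1
        - Real.exp t * deriv (u i) (Real.exp t) * h3
    · intro i t
      refine ((hd1 _ _ (hφ1 i _ (Real.exp_pos t))).comp t (Real.hasDerivAt_exp t)).congr_deriv ?_
      ring
    · intro i t
      have h1 := hφ2 i _ (Real.exp_pos t)
      have h0 : DifferentiableAt ℝ (fun s => s * deriv (φ i) s) (Real.exp t) :=
        differentiableAt_id.mul (hd2 _ _ (hφ1 i _ (Real.exp_pos t))).differentiableAt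
      refine (h0.hasDerivAt.comp t (Real.hasDerivAt_exp t)).congr_deriv ?_
      have h2 : ∑ j, A i j * (Real.exp (u j (Real.exp t) + (2 + β j) * t) * φ j (Real.exp t))
          = Real.exp t * ∑ j, A i j * Real.exp t ^ (β j + 1) * Real.exp (u j (Real.exp t))
            * φ j (Real.exp t) := by
        rw [Finset.mul_sum]
        refine Finset.sum_congr rfl fun j _ => ?_
        rw [hE]
        ring
      rw [h2]
      linear_combination Real.exp t * h1
    · intro i
      have h1 := hu3 i
      rw [← Real.range_exp, ← Set.image_univ] at h1
      rw [integrableOn_image_iff_integrableOn_abs_deriv_smul MeasurableSet.univ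
        (fun x _ => (Real.hasDerivAt_exp x).hasDerivWithinAt) Real.exp_injective.injOn,
        integrableOn_univ] at h1
      refine h1.congr (Eventually.of_forall fun t => ?_)
      simp only [smul_eq_mul, abs_of_pos (Real.exp_pos _)]
      exact (hE i t).symm
    · intro i t
      exact hM i _ (Real.exp_pos t)
  obtain ⟨C, hC⟩ := hsys.main hn hA
  refine ⟨C, fun i r hr => ?_⟩
  have := hC i (Real.log r)
  simp only [Real.exp_log hr] at this
  rw [this]; ring
end

section
/- Let A satisfy (H1) and β_i > -2 for all i ∈ I. Suppose that for each c = (c_1,...,c_{n-1}) in a neighborhood of a point of Π₁ there is a finite-energy radial solution u(·;c) of the singular Liouville system with u_i(0) = c_i for i = 1,...,n-1 and u_n(0) = 0, depending differentiably on c, with energy σ(c) = (σ_1(c),...,σ_n(c)). Then the (n-1)×(n-1) Jacobian matrix M = (∂σ_i/∂c_j)_{1 ≤ i,j ≤ n-1} is nonsingular at every point of Π₁. -/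
open Set MeasureTheory

/-- Energy of a radial solution: σ_i = (1/2π)∫_{ℝ²}|x|^{β_i}e^{u_i} = ∫_0^∞ r^{β_i+1}e^{u_i(r)}dr. -/
noncomputable def energy {n : ℕ} (β : Fin n → ℝ) (u : Fin n → ℝ → ℝ) (i : Fin n) : ℝ :=
  ∫ r in Set.Ioi (0:ℝ), r ^ (β i + 1) * Real.exp (u i r)

/-- Λ_J(σ) = 2 Σ_{i∈J}(β_i+2)σ_i − Σ_{i,j∈J} a_{ij} σ_i σ_j. -/
def Lam {n : ℕ} (A : Matrix (Fin n) (Fin n) ℝ) (β : Fin n → ℝ)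
    (J : Finset (Fin n)) (σ : Fin n → ℝ) : ℝ :=
  2 * ∑ i ∈ J, (β i + 2) * σ i - ∑ i ∈ J, ∑ j ∈ J, A i j * σ i * σ j

open Set MeasureTheory Filter Topology

/-- comparison from -∞ -/
lemma nonneg_of_deriv_nonneg_atBot {f f' : ℝ → ℝ} {T : ℝ}
    (hf : ∀ t ≤ T, HasDerivAt f (f' t) t) (h0 : ∀ t ≤ T, 0 ≤ f' t)
    {l : ℝ} (hl : Tendsto f atBot (𝓝 l)) : ∀ t ≤ T, l ≤ f t := by
  intro t ht
  have hm : MonotoneOn f (Iic T) := by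
    apply monotoneOn_of_deriv_nonneg (convex_Iic T)
    · intro x hx; exact (hf x hx).continuousAt.continuousWithinAt
    · intro x hx; rw [interior_Iic] at hx
      exact (hf x (le_of_lt hx)).differentiableAt.differentiableWithinAt
    · intro x hx; rw [interior_Iic] at hx
      rw [(hf x (le_of_lt hx)).deriv]; exact h0 x (le_of_lt hx)
  apply le_of_tendsto hl
  filter_upwards [eventually_le_atBot t] with s hs
  exact hm (hs.trans ht) ht hs

lemma mono_of_deriv {f f' : ℝ → ℝ} {a c : ℝ} (hac : a ≤ c)
    (hf : ∀ t, a ≤ t → t ≤ c → HasDerivAt f (f' t) t)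
    (h0 : ∀ t, a ≤ t → t ≤ c → 0 ≤ f' t) : f a ≤ f c := by
  have hm : MonotoneOn f (Icc a c) := by
    apply monotoneOn_of_deriv_nonneg (convex_Icc a c)
    · intro x hx; exact (hf x hx.1 hx.2).continuousAt.continuousWithinAt
    · intro x hx; rw [interior_Icc] at hx
      exact (hf x hx.1.le hx.2.le).differentiableAt.differentiableWithinAt
    · intro x hx; rw [interior_Icc] at hx
      rw [(hf x hx.1.le hx.2.le).deriv]; exact h0 x hx.1.le hx.2.le
  exact hm ⟨le_rfl, hac⟩ ⟨hac, le_rfl⟩ hac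

lemma abs_le_of_deriv_atBot {f f' h h' : ℝ → ℝ} {T : ℝ}
    (hf : ∀ t ≤ T, HasDerivAt f (f' t) t) (hh : ∀ t ≤ T, HasDerivAt h (h' t) t)
    (hle : ∀ t ≤ T, |f' t| ≤ h' t)
    (hl : Tendsto f atBot (𝓝 0)) (hl' : Tendsto h atBot (𝓝 0)) : ∀ t ≤ T, |f t| ≤ h t := by
  intro t ht
  have h1 := nonneg_of_deriv_nonneg_atBot (f := fun t => h t - f t) (f' := fun t => h' t - f' t)
    (fun t ht => (hh t ht).sub (hf t ht))
    (fun t ht => by have := abs_le.1 (hle t ht); linarith) (by simpa using hl'.sub hl) t ht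
  have h2 := nonneg_of_deriv_nonneg_atBot (f := fun t => h t + f t) (f' := fun t => h' t + f' t)
    (fun t ht => (hh t ht).add (hf t ht))
    (fun t ht => by have := abs_le.1 (hle t ht); linarith) (by simpa using hl'.add hl) t ht
  rw [abs_le]; constructor <;> linarith

/-- comparison at +∞ -/
lemma abs_sub_le_of_deriv_atTop {f f' h h' : ℝ → ℝ} {T l : ℝ}
    (hf : ∀ t, T ≤ t → HasDerivAt f (f' t) t) (hh : ∀ t, T ≤ t → HasDerivAt h (h' t) t)
    (hle : ∀ t, T ≤ t → |f' t| ≤ - h' t)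
    (hl : Tendsto f atTop (𝓝 l)) (hl' : Tendsto h atTop (𝓝 0)) : |f T - l| ≤ h T := by
  have key : ∀ t, T ≤ t → |f t - f T| ≤ h T - h t := by
    intro t ht
    have h1 := mono_of_deriv (f := fun t => - h t - f t) (f' := fun t => - h' t - f' t) ht
      (fun t ht _ => (hh t ht).neg.sub (hf t ht))
      (fun t ht _ => by have := abs_le.1 (hle t ht); linarith)
    have h2 := mono_of_deriv (f := fun t => - h t + f t) (f' := fun t => - h' t + f' t) ht
      (fun t ht _ => (hh t ht).neg.add (hf t ht))
      (fun t ht _ => by have := abs_le.1 (hle t ht); linarith)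
    rw [abs_le]; constructor <;> linarith
  have e1 : Tendsto (fun t => |f t - f T|) atTop (𝓝 |l - f T|) := (hl.sub_const _).abs
  have e2 : Tendsto (fun t => h T - h t) atTop (𝓝 (h T)) := by
    simpa using (tendsto_const_nhds (x := h T)).sub hl'
  rw [abs_sub_comm]
  exact le_of_tendsto_of_tendsto e1 e2 (by filter_upwards [eventually_ge_atTop T] with t ht using key t ht)

structure LSol {N : ℕ} (A : Fin N → Fin N → ℝ) (b c : Fin N → ℝ)
    (u V : Fin N → ℝ → ℝ) (σ : Fin N → ℝ) : Prop where
  hu : ∀ i t, HasDerivAt (u i) (-∑ j, A i j * V j t) t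
  hV : ∀ i t, HasDerivAt (V i) (Real.exp (u i t + b i * t)) t
  u0 : ∀ i, Tendsto (u i) atBot (𝓝 (c i))
  V0 : ∀ i, Tendsto (V i) atBot (𝓝 0)
  V1 : ∀ i, Tendsto (V i) atTop (𝓝 (σ i))

lemma tendsto_exp_mul_atBot {k : ℝ} (hk : 0 < k) (C : ℝ) :
    Tendsto (fun t : ℝ => C * Real.exp (k * t)) atBot (𝓝 0) := by
  have : Tendsto (fun t : ℝ => Real.exp (k * t)) atBot (𝓝 0) :=
    Real.tendsto_exp_atBot.comp (tendsto_id.const_mul_atBot hk)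
  simpa using this.const_mul C

lemma tendsto_exp_mul_atTop {k : ℝ} (hk : k < 0) (C : ℝ) :
    Tendsto (fun t : ℝ => C * Real.exp (k * t)) atTop (𝓝 0) := by
  have : Tendsto (fun t : ℝ => Real.exp (k * t)) atTop (𝓝 0) :=
    Real.tendsto_exp_atBot.comp (tendsto_id.const_mul_atTop_of_neg hk)
  simpa using this.const_mul C

lemma hasDerivAt_lin (k t : ℝ) : HasDerivAt (fun t : ℝ => k * t) k t := by
  simpa using (hasDerivAt_id t).const_mul k

lemma hasDerivAt_exp_mul (C k t : ℝ) :
    HasDerivAt (fun t : ℝ => C * Real.exp (k * t)) (C * k * Real.exp (k * t)) t := by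
  exact (((hasDerivAt_lin k t).exp).const_mul C).congr_deriv (by ring)

namespace LSol
variable {N : ℕ} {A : Fin N → Fin N → ℝ} {b c : Fin N → ℝ}
    {u V : Fin N → ℝ → ℝ} {σ : Fin N → ℝ}

lemma V_nonneg (h : LSol A b c u V σ) (i : Fin N) (t : ℝ) : 0 ≤ V i t :=
  nonneg_of_deriv_nonneg_atBot (T := t) (fun s _ => h.hV i s) (fun s _ => (Real.exp_pos _).le)
    (h.V0 i) t le_rfl

lemma V_mono (h : LSol A b c u V σ) (i : Fin N) : Monotone (V i) := fun _ _ hst =>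
  mono_of_deriv hst (fun s _ _ => h.hV i s) (fun s _ _ => (Real.exp_pos _).le)

lemma V_le_sigma (h : LSol A b c u V σ) (i : Fin N) (t : ℝ) : V i t ≤ σ i :=
  (h.V_mono i).ge_of_tendsto (h.V1 i) t

lemma m_mono (hA : ∀ i j, 0 ≤ A i j) (h : LSol A b c u V σ) (i : Fin N) :
    Monotone (fun t => ∑ j, A i j * V j t) := fun _ _ hst =>
  Finset.sum_le_sum fun j _ => mul_le_mul_of_nonneg_left (h.V_mono j hst) (hA i j)

lemma m_nonneg (hA : ∀ i j, 0 ≤ A i j) (h : LSol A b c u V σ) (i : Fin N) (t : ℝ) :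
    0 ≤ ∑ j, A i j * V j t :=
  Finset.sum_nonneg fun j _ => mul_nonneg (hA i j) (h.V_nonneg j t)

lemma u_le (hA : ∀ i j, 0 ≤ A i j) (h : LSol A b c u V σ) (i : Fin N) (t : ℝ) :
    u i t ≤ c i := by
  have := nonneg_of_deriv_nonneg_atBot (T := t) (fun s _ => (h.hu i s).neg)
    (fun s _ => by simpa using h.m_nonneg hA i s) (h.u0 i).neg t le_rfl
  simp at this; exact this

lemma E_le (hA : ∀ i j, 0 ≤ A i j) (h : LSol A b c u V σ) (i : Fin N) (t : ℝ) :
    Real.exp (u i t + b i * t) ≤ Real.exp (c i) * Real.exp (b i * t) := by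
  rw [← Real.exp_add, Real.exp_le_exp]; linarith [h.u_le hA i t]

lemma V_le (hA : ∀ i j, 0 ≤ A i j) (hb : ∀ i, 0 < b i) (h : LSol A b c u V σ) (i : Fin N) (t : ℝ) :
    V i t ≤ Real.exp (c i) / b i * Real.exp (b i * t) := by
  have := abs_le_of_deriv_atBot (T := t) (fun s _ => h.hV i s)
    (fun s _ => hasDerivAt_exp_mul (Real.exp (c i) / b i) (b i) s)
    (fun s _ => by
      rw [abs_of_pos (Real.exp_pos _), div_mul_cancel₀ _ (hb i).ne']; exact h.E_le hA i s)
    (h.V0 i) (tendsto_exp_mul_atBot (hb i) _) t le_rfl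
  exact (le_abs_self _).trans this

lemma hE (h : LSol A b c u V σ) (i : Fin N) (t : ℝ) :
    HasDerivAt (fun t => Real.exp (u i t + b i * t))
      (Real.exp (u i t + b i * t) * (b i - ∑ j, A i j * V j t)) t := by
  have := ((h.hu i t).fun_add (hasDerivAt_lin (b i) t)).exp
  convert this using 1
  ring

lemma m_gt (hA : ∀ i j, 0 ≤ A i j) (h : LSol A b c u V σ) (i : Fin N) :
    ∃ t, b i < ∑ j, A i j * V j t := by
  by_contra! hcon
  have h1 : ∀ t, 0 ≤ t → Real.exp (u i 0 + b i * 0) ≤ Real.exp (u i t + b i * t) := fun t ht =>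
    mono_of_deriv (f := fun t => Real.exp (u i t + b i * t)) ht (fun s _ _ => h.hE i s)
      (fun s _ _ => mul_nonneg (Real.exp_pos _).le (by linarith [hcon s]))
  set e := Real.exp (u i 0 + b i * 0) with he
  have hepos : 0 < e := Real.exp_pos _
  have h2 : ∀ t, 0 ≤ t → V i 0 + e * t ≤ V i t := fun t ht => by
    have := mono_of_deriv (f := fun t => V i t - e * t) ht
      (fun s _ _ => (h.hV i s).sub (hasDerivAt_lin e s))
      (fun s hs _ => by simpa using h1 s hs)
    simp at this; linarith
  have h3 := h2 ((|σ i| + 1) / e) (by positivity)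
  rw [mul_div_cancel₀ _ hepos.ne'] at h3
  have h4 := h.V_le_sigma i ((|σ i| + 1) / e)
  have h5 := h.V_nonneg i 0
  linarith [le_abs_self (σ i)]

lemma sigma_gt (hA : ∀ i j, 0 ≤ A i j) (h : LSol A b c u V σ) (i : Fin N) :
    b i < ∑ j, A i j * σ j := by
  obtain ⟨t, ht⟩ := h.m_gt hA i
  exact ht.trans_le (Finset.sum_le_sum fun j _ => mul_le_mul_of_nonneg_left (h.V_le_sigma j t) (hA i j))

lemma E_decay (hA : ∀ i j, 0 ≤ A i j) (h : LSol A b c u V σ) (i : Fin N) {T δ : ℝ}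
    (hT : b i + δ ≤ ∑ j, A i j * V j T) (s : ℝ) (hs : T ≤ s) :
    Real.exp (u i s + b i * s) ≤ Real.exp (u i T + b i * T) * Real.exp (-δ * (s - T)) := by
  have := mono_of_deriv (f := fun s => -(u i s + b i * s) - δ * s) hs
      (fun s _ _ => ((h.hu i s).add (hasDerivAt_lin (b i) s)).neg.sub
        (hasDerivAt_lin δ s))
      (fun s hs _ => by have := h.m_mono hA i hs; simp at this ⊢; linarith)
  simp at this
  rw [← Real.exp_add, Real.exp_le_exp]; linarith

lemma exists_T (hA : ∀ i j, 0 ≤ A i j) (h : LSol A b c u V σ) :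
    ∃ T δ : ℝ, 0 ≤ T ∧ 0 < δ ∧ ∀ i, b i + 2 * δ ≤ ∑ j, A i j * V j T := by
  choose t ht using h.m_gt hA
  obtain ⟨T, hT⟩ := (Set.finite_range t).bddAbove
  have h1 : ∀ i, b i < ∑ j, A i j * V j (max T 0) := fun i =>
    (ht i).trans_le (h.m_mono hA i ((hT ⟨i, rfl⟩).trans (le_max_left _ _)))
  have h2 : ∃ δ : ℝ, 0 < δ ∧ ∀ i, b i + 2 * δ ≤ ∑ j, A i j * V j (max T 0) := by
    have : ∀ᶠ δ : ℝ in 𝓝[>] 0, ∀ i, b i + 2 * δ ≤ ∑ j, A i j * V j (max T 0) := by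
      rw [eventually_all]
      intro i
      have : Tendsto (fun δ : ℝ => b i + 2 * δ) (𝓝[>] 0) (𝓝 (b i)) := by
        have : Tendsto (fun δ : ℝ => b i + 2 * δ) (𝓝 0) (𝓝 (b i + 2 * 0)) := by
          apply Continuous.tendsto; fun_prop
        simp at this
        exact this.mono_left nhdsWithin_le_nhds
      exact (this.eventually (eventually_lt_nhds (h1 i))).mono fun _ h => h.le
    obtain ⟨δ, h1, h2⟩ := (this.and self_mem_nhdsWithin).exists
    exact ⟨δ, h2, h1⟩
  obtain ⟨δ, h3, h4⟩ := h2
  exact ⟨_, δ, le_max_right _ _, h3, h4⟩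

lemma E_tendsto_bot (hA : ∀ i j, 0 ≤ A i j) (hb : ∀ i, 0 < b i) (h : LSol A b c u V σ) (i : Fin N) :
    Tendsto (fun t => Real.exp (u i t + b i * t)) atBot (𝓝 0) :=
  squeeze_zero (fun _ => (Real.exp_pos _).le) (h.E_le hA i) (tendsto_exp_mul_atBot (hb i) _)

lemma E_tendsto_top (hA : ∀ i j, 0 ≤ A i j) (h : LSol A b c u V σ) (i : Fin N) :
    Tendsto (fun t => Real.exp (u i t + b i * t)) atTop (𝓝 0) := by
  obtain ⟨T, δ, hT, hδ, h1⟩ := h.exists_T hA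
  apply squeeze_zero' (Eventually.of_forall fun _ => (Real.exp_pos _).le)
    (g := fun t => (Real.exp (u i T + b i * T) * Real.exp (2 * δ * T)) * Real.exp ((-(2*δ)) * t))
  · filter_upwards [eventually_ge_atTop T] with s hs
    have := h.E_decay hA i (h1 i) s hs
    rw [mul_assoc, ← Real.exp_add]
    convert this using 3; ring
  · exact tendsto_exp_mul_atTop (by linarith) _

lemma pohozaev (hA : ∀ i j, 0 ≤ A i j) (hs : ∀ i j, A i j = A j i) (hb : ∀ i, 0 < b i) (h : LSol A b c u V σ) :
    ∑ i, b i * σ i = (1/2) * ∑ i, ∑ j, A i j * σ i * σ j := by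
  set P : ℝ → ℝ := fun t => ∑ i, Real.exp (u i t + b i * t) - ∑ i, b i * V i t
    + (1/2) * ∑ i, ∑ j, A i j * V i t * V j t with hP
  have hd : ∀ t, HasDerivAt P 0 t := by
    intro t
    have h1 : HasDerivAt (fun t => ∑ i, Real.exp (u i t + b i * t)) _ t :=
      HasDerivAt.fun_sum (fun i _ => h.hE i t)
    have h2 : HasDerivAt (fun t => ∑ i, b i * V i t) _ t :=
      HasDerivAt.fun_sum (fun i _ => (h.hV i t).const_mul (b i))
    have h3 : HasDerivAt (fun t => ∑ i, ∑ j, A i j * V i t * V j t) _ t :=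
      HasDerivAt.fun_sum (fun i _ => HasDerivAt.fun_sum (fun j _ =>
        ((h.hV i t).const_mul (A i j)).mul (h.hV j t)))
    refine ((h1.fun_sub h2).fun_add (h3.const_mul (1/2))).congr_deriv ?_
    simp only [Finset.sum_add_distrib, mul_sub, Finset.sum_sub_distrib, Finset.mul_sum]
    have e : ∑ i, ∑ j, A i j * Real.exp (u i t + b i * t) * V j t =
        ∑ i, ∑ j, A i j * V i t * Real.exp (u j t + b j * t) := by
      rw [Finset.sum_comm]
      refine Finset.sum_congr rfl fun i _ => Finset.sum_congr rfl fun j _ => ?_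
      rw [hs j i]; ring
    have e2 : ∑ i, ∑ j, Real.exp (u i t + b i * t) * (A i j * V j t) =
       ∑ i, ∑ j, A i j * Real.exp (u i t + b i * t) * V j t := by
      refine Finset.sum_congr rfl fun i _ => Finset.sum_congr rfl fun j _ => ?_
      ring
    have e3 : ∑ i, Real.exp (u i t + b i * t) * b i = ∑ i, b i * Real.exp (u i t + b i * t) :=
      Finset.sum_congr rfl fun i _ => mul_comm _ _
    rw [← e, e2, e3]; ring
  have hc : ∀ s t, P s = P t :=
    is_const_of_deriv_eq_zero (fun t => (hd t).differentiableAt) (fun t => (hd t).deriv)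
  have l1 : Tendsto P atBot (𝓝 0) := by
    have := ((tendsto_finsetSum Finset.univ (fun i _ => h.E_tendsto_bot hA hb i)).sub
      (tendsto_finsetSum Finset.univ (fun i _ => (h.V0 i).const_mul (b i)))).add
      ((tendsto_finsetSum Finset.univ (fun i _ => tendsto_finsetSum Finset.univ
        (fun j _ => ((h.V0 i).const_mul (A i j)).mul (h.V0 j)))).const_mul (1/2))
    simpa [hP] using this
  have l2 : Tendsto P atTop (𝓝 (0 - ∑ i, b i * σ i + (1/2) * ∑ i, ∑ j, A i j * σ i * σ j)) := by
    have := ((tendsto_finsetSum Finset.univ (fun i _ => h.E_tendsto_top hA i)).sub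
      (tendsto_finsetSum Finset.univ (fun i _ => (h.V1 i).const_mul (b i)))).add
      ((tendsto_finsetSum Finset.univ (fun i _ => tendsto_finsetSum Finset.univ
        (fun j _ => ((h.V1 i).const_mul (A i j)).mul (h.V1 j)))).const_mul (1/2))
    simpa [hP] using this
  have hPc : P = fun _ => P 0 := funext fun t => hc t 0
  rw [hPc] at l1 l2
  have e1 := tendsto_nhds_unique tendsto_const_nhds l1
  have e2 := tendsto_nhds_unique tendsto_const_nhds l2
  linarith

end LSol

open Set MeasureTheory Filter Topology

lemma gron {N : ℕ} {A : Fin N → Fin N → ℝ} (hA : ∀ i j, 0 ≤ A i j)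
    {d w wp : Fin N → ℝ → ℝ} {κ₁ κ₂ : ℝ} (h1 : 0 ≤ κ₁) (h2 : 0 ≤ κ₂) {k ρ : ℝ → ℝ} {s t : ℝ}
    (hst : s ≤ t)
    (hd : ∀ i r, HasDerivAt (d i) (-∑ j, A i j * w j r) r)
    (hw : ∀ i r, HasDerivAt (w i) (wp i r) r)
    (hρ : ∀ r, HasDerivAt ρ (k r) r)
    (hk1 : ∀ r, s ≤ r → r ≤ t → Real.exp ((κ₂ - κ₁) * r) ≤ k r)
    (hk2 : ∀ i r, s ≤ r → r ≤ t →
      |wp i r| * Real.exp (-κ₂ * r) ≤ k r * (|d i r| * Real.exp (-κ₁ * r))) :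
    (∑ i, (d i t * Real.exp (-κ₁ * t)) ^ 2 + ∑ i, (w i t * Real.exp (-κ₂ * t)) ^ 2) ≤
    (∑ i, (d i s * Real.exp (-κ₁ * s)) ^ 2 + ∑ i, (w i s * Real.exp (-κ₂ * s)) ^ 2) *
      Real.exp ((∑ i, ∑ j, A i j + N) * (ρ t - ρ s)) := by
  set M : ℝ := ∑ i, ∑ j, A i j + N with hM
  set D : Fin N → ℝ → ℝ := fun i r => d i r * Real.exp (-κ₁ * r) with hD
  set Z : Fin N → ℝ → ℝ := fun i r => w i r * Real.exp (-κ₂ * r) with hZ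
  set Q : ℝ → ℝ := fun r => ∑ i, (D i r) ^ 2 + ∑ i, (Z i r) ^ 2 with hQ
  have hex : ∀ κ r : ℝ, HasDerivAt (fun r => Real.exp (-κ * r)) (Real.exp (-κ * r) * (-κ)) r :=
    fun κ r => (hasDerivAt_lin (-κ) r).exp
  have hDd : ∀ i r, HasDerivAt (D i) (-∑ j, A i j * w j r * Real.exp (-κ₁ * r) - κ₁ * D i r) r := by
    intro i r
    refine ((hd i r).fun_mul (hex κ₁ r)).congr_deriv ?_
    rw [← Finset.sum_mul]; simp only [hD]; ring
  have hZd : ∀ i r, HasDerivAt (Z i) (wp i r * Real.exp (-κ₂ * r) - κ₂ * Z i r) r := by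
    intro i r
    refine ((hw i r).fun_mul (hex κ₂ r)).congr_deriv ?_
    simp only [hZ]; ring
  have hQd : ∀ r, HasDerivAt Q
      (∑ i, 2 * D i r * (-∑ j, A i j * w j r * Real.exp (-κ₁ * r) - κ₁ * D i r) +
       ∑ i, 2 * Z i r * (wp i r * Real.exp (-κ₂ * r) - κ₂ * Z i r)) r := by
    intro r
    refine ((HasDerivAt.fun_sum (u := Finset.univ) fun i _ => (hDd i r).fun_pow 2).fun_add
      (HasDerivAt.fun_sum (u := Finset.univ) fun i _ => (hZd i r).fun_pow 2)).congr_deriv ?_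
    simp
  have hQ0 : ∀ r, 0 ≤ Q r := fun r => by
    simp only [hQ]; positivity
  have hDQ : ∀ i r, D i r ^ 2 ≤ ∑ i, (D i r) ^ 2 := fun i r =>
    Finset.single_le_sum (f := fun i => D i r ^ 2) (fun _ _ => sq_nonneg _) (Finset.mem_univ i)
  have hZQ : ∀ i r, Z i r ^ 2 ≤ ∑ i, (Z i r) ^ 2 := fun i r =>
    Finset.single_le_sum (f := fun i => Z i r ^ 2) (fun _ _ => sq_nonneg _) (Finset.mem_univ i)
  have hDZ : ∀ i j r, 2 * |D i r| * |Z j r| ≤ Q r := by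
    intro i j r
    have := hDQ i r
    have := hZQ j r
    simp only [hQ]
    nlinarith [sq_nonneg (|D i r| - |Z j r|), sq_abs (D i r), sq_abs (Z j r)]
  have hQle : ∀ r, s ≤ r → r ≤ t →
      (∑ i, 2 * D i r * (-∑ j, A i j * w j r * Real.exp (-κ₁ * r) - κ₁ * D i r) +
       ∑ i, 2 * Z i r * (wp i r * Real.exp (-κ₂ * r) - κ₂ * Z i r)) ≤ M * k r * Q r := by
    intro r hr1 hr2
    have hk := hk1 r hr1 hr2
    have hk0 : 0 ≤ k r := (Real.exp_pos _).le.trans hk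
    have e1 : ∀ i, 2 * D i r * (-∑ j, A i j * w j r * Real.exp (-κ₁ * r) - κ₁ * D i r)
        ≤ (∑ j, A i j) * (k r * Q r) := by
      intro i
      have : 2 * D i r * (-∑ j, A i j * w j r * Real.exp (-κ₁ * r) - κ₁ * D i r) ≤
          ∑ j, A i j * (-(2 * D i r * w j r * Real.exp (-κ₁ * r))) := by
        have : ∑ j, A i j * (-(2 * D i r * w j r * Real.exp (-κ₁ * r))) =
          2 * D i r * (-∑ j, A i j * w j r * Real.exp (-κ₁ * r)) := by
          rw [← Finset.sum_neg_distrib, Finset.mul_sum]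
          exact Finset.sum_congr rfl fun j _ => by ring
        rw [this]
        nlinarith [mul_nonneg h1 (sq_nonneg (D i r))]
      refine this.trans ?_
      rw [Finset.sum_mul]
      refine Finset.sum_le_sum fun j _ => mul_le_mul_of_nonneg_left ?_ (hA i j)
      have e : w j r * Real.exp (-κ₁ * r) = Z j r * Real.exp ((κ₂ - κ₁) * r) := by
        simp only [hZ]; rw [mul_assoc, ← Real.exp_add]; congr 2; ring
      rw [mul_assoc, e]
      calc -(2 * D i r * (Z j r * Real.exp ((κ₂ - κ₁) * r)))
          ≤ |-(2 * D i r * (Z j r * Real.exp ((κ₂ - κ₁) * r)))| := le_abs_self _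
        _ = Real.exp ((κ₂ - κ₁) * r) * (2 * |D i r| * |Z j r|) := by
            rw [abs_neg, abs_mul, abs_mul, abs_mul, Real.abs_exp]; simp; ring
        _ ≤ k r * Q r := mul_le_mul hk (hDZ i j r) (by positivity) hk0
    have e2 : ∀ i, 2 * Z i r * (wp i r * Real.exp (-κ₂ * r) - κ₂ * Z i r) ≤ k r * Q r := by
      intro i
      calc 2 * Z i r * (wp i r * Real.exp (-κ₂ * r) - κ₂ * Z i r)
          ≤ 2 * Z i r * (wp i r * Real.exp (-κ₂ * r)) := by
            nlinarith [mul_nonneg h2 (sq_nonneg (Z i r))]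
        _ ≤ |2 * Z i r * (wp i r * Real.exp (-κ₂ * r))| := le_abs_self _
        _ = 2 * |Z i r| * (|wp i r| * Real.exp (-κ₂ * r)) := by
            rw [abs_mul, abs_mul, abs_mul, Real.abs_exp]; simp
        _ ≤ 2 * |Z i r| * (k r * (|d i r| * Real.exp (-κ₁ * r))) :=
            mul_le_mul_of_nonneg_left (hk2 i r hr1 hr2) (by positivity)
        _ = k r * (2 * |D i r| * |Z i r|) := by
            have : |D i r| = |d i r| * Real.exp (-κ₁ * r) := by
              simp only [hD]; rw [abs_mul, Real.abs_exp]
            rw [this]; ring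
        _ ≤ k r * Q r := mul_le_mul_of_nonneg_left (hDZ i i r) hk0
    calc _ ≤ ∑ i, (∑ j, A i j) * (k r * Q r) + ∑ i : Fin N, k r * Q r :=
          add_le_add (Finset.sum_le_sum fun i _ => e1 i) (Finset.sum_le_sum fun i _ => e2 i)
      _ = M * k r * Q r := by
          rw [← Finset.sum_mul, Finset.sum_const, hM]; simp; ring
  have hm := mono_of_deriv (f := fun r => -(Q r * Real.exp (-M * ρ r))) hst
    (fun r _ _ => ((hQd r).fun_mul (((hρ r).const_mul (-M)).exp)).fun_neg)
    (fun r hr1 hr2 => by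
      have := hQle r hr1 hr2
      have h3 := Real.exp_pos (-M * ρ r)
      nlinarith)
  have hm' : Q t * Real.exp (-M * ρ t) ≤ Q s * Real.exp (-M * ρ s) := by linarith
  have := mul_le_mul_of_nonneg_right hm' (Real.exp_pos (M * ρ t)).le
  rw [mul_assoc, mul_assoc, ← Real.exp_add, ← Real.exp_add] at this
  calc Q t = Q t * Real.exp (-M * ρ t + M * ρ t) := by simp
    _ ≤ _ := this
    _ = Q s * Real.exp (M * (ρ t - ρ s)) := by congr 2; ring

lemma abs_exp_sub_le (x y : ℝ) : |Real.exp y - Real.exp x| ≤ max (Real.exp x) (Real.exp y) * |y - x| := by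
  rcases le_total x y with h | h
  · rw [abs_of_nonneg (by linarith [Real.exp_le_exp.2 h]), abs_of_nonneg (by linarith),
      max_eq_right (Real.exp_le_exp.2 h)]
    have := Real.add_one_le_exp (x - y)
    have e : Real.exp x = Real.exp y * Real.exp (x - y) := by rw [← Real.exp_add]; congr 1; ring
    rw [e]; nlinarith [Real.exp_pos y]
  · rw [abs_of_nonpos (by linarith [Real.exp_le_exp.2 h]), abs_of_nonpos (by linarith),
      max_eq_left (Real.exp_le_exp.2 h)]
    have := Real.add_one_le_exp (y - x)
    have e : Real.exp y = Real.exp x * Real.exp (y - x) := by rw [← Real.exp_add]; congr 1; ring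
    rw [e]; nlinarith [Real.exp_pos x]

lemma exists_lb {N : ℕ} {b : Fin N → ℝ} (hb : ∀ i, 0 < b i) : ∃ η > 0, ∀ i, 2 * η ≤ b i := by
  have : ∀ᶠ η : ℝ in 𝓝[>] 0, ∀ i, 2 * η ≤ b i := by
    rw [eventually_all]
    intro i
    have h1 : Tendsto (fun δ : ℝ => 2 * δ) (𝓝[>] 0) (𝓝 0) := by
      have : Tendsto (fun δ : ℝ => 2 * δ) (𝓝 0) (𝓝 (2 * 0)) := by
        apply Continuous.tendsto; fun_prop
      simp at this
      exact this.mono_left nhdsWithin_le_nhds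
    exact (h1.eventually (eventually_lt_nhds (hb i))).mono fun _ h => h.le
  obtain ⟨η, h1, h2⟩ := (this.and self_mem_nhdsWithin).exists
  exact ⟨η, h2, h1⟩

namespace LSol
variable {N : ℕ} {A : Fin N → Fin N → ℝ} {b c c' : Fin N → ℝ}
    {u V u' V' : Fin N → ℝ → ℝ} {σ σ' : Fin N → ℝ}

lemma diff_u (h : LSol A b c u V σ) (h' : LSol A b c' u' V' σ') (i : Fin N) (r : ℝ) :
    HasDerivAt (fun r => u' i r - u i r) (-∑ j, A i j * (V' j r - V j r)) r := by
  refine ((h'.hu i r).fun_sub (h.hu i r)).congr_deriv ?_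
  simp only [mul_sub, Finset.sum_sub_distrib]; ring

lemma diff_V (h : LSol A b c u V σ) (h' : LSol A b c' u' V' σ') (i : Fin N) (r : ℝ) :
    HasDerivAt (fun r => V' i r - V i r)
      (Real.exp (u' i r + b i * r) - Real.exp (u i r + b i * r)) r :=
  (h'.hV i r).fun_sub (h.hV i r)

/-- bounds on (-∞, T] -/
lemma left_bound (hA : ∀ i j, 0 ≤ A i j) (hb : ∀ i, 0 < b i) (h : LSol A b c u V σ)
    (α : Fin N → ℝ) (T : ℝ) (hT : 0 ≤ T) : ∃ K > 0, ∃ η > 0, (∀ i, 2 * η ≤ b i) ∧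
    ∀ τ : ℝ, 0 < τ → τ ≤ 1 → ∀ u' V' σ', LSol A b (fun i => c i + τ * α i) u' V' σ' →
    ∀ t ≤ T, ∀ i, |u' i t - u i t| ≤ K * τ ∧ |V' i t - V i t| ≤ K * τ * Real.exp (η * t) := by
  obtain ⟨η, hη, hηb⟩ := exists_lb hb
  -- constants
  set C : ℝ := 1 + ∑ i, Real.exp (c i + |α i|) * Real.exp ((b i - 2 * η) * T) with hC
  have hC1 : ∀ i, Real.exp (c i + |α i|) * Real.exp ((b i - 2 * η) * T) ≤ C := by
    intro i
    have := Finset.single_le_sum (f := fun i => Real.exp (c i + |α i|) * Real.exp ((b i - 2 * η) * T))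
      (fun _ _ => by positivity) (Finset.mem_univ i)
    linarith
  have hC0 : 1 ≤ C := by
    have : 0 ≤ ∑ i, Real.exp (c i + |α i|) * Real.exp ((b i - 2 * η) * T) := by positivity
    linarith
  set M : ℝ := ∑ i, ∑ j, A i j + N with hM
  have hM0 : 0 ≤ M := by
    have : 0 ≤ ∑ i, ∑ j, A i j := Finset.sum_nonneg fun i _ => Finset.sum_nonneg fun j _ => hA i j
    positivity
  set R : ℝ := (∑ i, α i ^ 2) * Real.exp (M * (C / η * Real.exp (η * T))) with hR
  have hR0 : 0 ≤ R := by positivity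
  refine ⟨Real.sqrt R + 1, by positivity, η, hη, hηb, ?_⟩
  intro τ hτ hτ1 u' V' σ' h' t ht i
  have hcc : ∀ i, Real.exp (c i + τ * α i) ≤ Real.exp (c i + |α i|) := fun i => by
    rw [Real.exp_le_exp]
    have : τ * α i ≤ |α i| := by
      calc τ * α i ≤ τ * |α i| := mul_le_mul_of_nonneg_left (le_abs_self _) hτ.le
        _ ≤ 1 * |α i| := mul_le_mul_of_nonneg_right hτ1 (abs_nonneg _)
        _ = _ := one_mul _
    linarith
  have hcc2 : ∀ i, Real.exp (c i) ≤ Real.exp (c i + |α i|) := fun i => by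
    rw [Real.exp_le_exp]; linarith [abs_nonneg (α i)]
  have key : ∀ s ≤ t, _ := fun s hs => gron hA (κ₁ := 0) (κ₂ := η) (ρ := fun r => C / η * Real.exp (η * r))
    (k := fun r => C * Real.exp (η * r)) le_rfl hη.le hs (h.diff_u h') (h.diff_V h')
    (fun r => (hasDerivAt_exp_mul (C / η) η r).congr_deriv (by field_simp))
    (fun r _ _ => by
      rw [sub_zero]; nlinarith [Real.exp_pos (η * r)])
    (fun i r _ hr => by
      have hrT : r ≤ T := hr.trans ht
      have e1 := abs_exp_sub_le (u i r + b i * r) (u' i r + b i * r)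
      have e2 : max (Real.exp (u i r + b i * r)) (Real.exp (u' i r + b i * r)) ≤
          Real.exp (c i + |α i|) * Real.exp (b i * r) :=
        max_le ((h.E_le hA i r).trans (mul_le_mul_of_nonneg_right (hcc2 i) (Real.exp_pos _).le))
          ((h'.E_le hA i r).trans (mul_le_mul_of_nonneg_right (hcc i) (Real.exp_pos _).le))
      have e3 : Real.exp (c i + |α i|) * Real.exp (b i * r) * Real.exp (-η * r) ≤
          C * Real.exp (η * r) := by
        have : Real.exp (b i * r) * Real.exp (-η * r) =
          Real.exp ((b i - 2 * η) * r) * Real.exp (η * r) := by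
          rw [← Real.exp_add, ← Real.exp_add]; congr 1; ring
        rw [mul_assoc, this, ← mul_assoc]
        refine mul_le_mul_of_nonneg_right (le_trans ?_ (hC1 i)) (Real.exp_pos _).le
        refine mul_le_mul_of_nonneg_left ?_ (Real.exp_pos _).le
        rw [Real.exp_le_exp]
        exact mul_le_mul_of_nonneg_left hrT (by linarith [hηb i])
      have e4 : u' i r + b i * r - (u i r + b i * r) = u' i r - u i r := by ring
      rw [e4] at e1
      simp only [neg_zero, zero_mul, Real.exp_zero, mul_one]
      calc _ ≤ (Real.exp (c i + |α i|) * Real.exp (b i * r) * |u' i r - u i r|) * Real.exp (-η * r) :=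
            mul_le_mul_of_nonneg_right (e1.trans (mul_le_mul_of_nonneg_right e2 (abs_nonneg _)))
              (Real.exp_pos _).le
        _ = (Real.exp (c i + |α i|) * Real.exp (b i * r) * Real.exp (-η * r)) * |u' i r - u i r| := by
            ring
        _ ≤ _ := mul_le_mul_of_nonneg_right e3 (abs_nonneg _))
  -- limit s → -∞
  have hz : ∀ i, Tendsto (fun s => (V' i s - V i s) * Real.exp (-η * s)) atBot (𝓝 0) := by
    intro i
    set H := Real.exp (c i + |α i|) / b i * 2 with hH
    apply squeeze_zero_norm (a := fun s => H * Real.exp ((b i - η) * s))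
    · intro s
      have f1 := h.V_le hA hb i s
      have f2 := h'.V_le hA hb i s
      have f3 := h.V_nonneg i s
      have f4 := h'.V_nonneg i s
      have f5 : Real.exp (c i) / b i * Real.exp (b i * s) ≤
        Real.exp (c i + |α i|) / b i * Real.exp (b i * s) :=
        mul_le_mul_of_nonneg_right (div_le_div_of_nonneg_right (hcc2 i) (hb i).le) (Real.exp_pos _).le
      have f6 : Real.exp (c i + τ * α i) / b i * Real.exp (b i * s) ≤
        Real.exp (c i + |α i|) / b i * Real.exp (b i * s) :=
        mul_le_mul_of_nonneg_right (div_le_div_of_nonneg_right (hcc i) (hb i).le) (Real.exp_pos _).le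
      have f7 : |V' i s - V i s| ≤ H * Real.exp (b i * s) := by
        rw [abs_le]; constructor <;> · rw [hH]; linarith
      rw [Real.norm_eq_abs, abs_mul, Real.abs_exp]
      calc _ ≤ H * Real.exp (b i * s) * Real.exp (-η * s) :=
            mul_le_mul_of_nonneg_right f7 (Real.exp_pos _).le
        _ = _ := by rw [mul_assoc, ← Real.exp_add]; congr 2; ring
    · exact tendsto_exp_mul_atBot (by linarith [hηb i]) _
  have hdl : ∀ i, Tendsto (fun s => (u' i s - u i s) * Real.exp (-0 * s)) atBot (𝓝 (τ * α i)) := by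
    intro i
    have := (h'.u0 i).sub (h.u0 i)
    simpa using this
  have hlim := ((tendsto_finsetSum Finset.univ fun i _ => (hdl i).pow 2).add
    (tendsto_finsetSum Finset.univ fun i _ => (hz i).pow 2)).mul
      ((Real.continuous_exp.tendsto _).comp
        (((tendsto_const_nhds (x := C / η * Real.exp (η * t))).sub
          (tendsto_exp_mul_atBot hη (C / η))).const_mul M))
  have hle := ge_of_tendsto hlim (by
    filter_upwards [eventually_le_atBot t] with s hs
    exact key s hs)
  have hle2 : ∑ i, (u' i t - u i t) ^ 2 + ∑ i, ((V' i t - V i t) * Real.exp (-η * t)) ^ 2 ≤ τ ^ 2 * R := by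
    simp only [neg_zero, zero_mul, Real.exp_zero, mul_one, sub_zero, ne_eq, OfNat.ofNat_ne_zero,
      not_false_eq_true, zero_pow, Finset.sum_const_zero, add_zero] at hle
    refine hle.trans ?_
    have : ∑ i, (τ * α i) ^ 2 = τ ^ 2 * ∑ i, α i ^ 2 := by
      rw [Finset.mul_sum]; exact Finset.sum_congr rfl fun i _ => by ring
    rw [this, hR, mul_assoc]
    refine mul_le_mul_of_nonneg_left (mul_le_mul_of_nonneg_left ?_ (by positivity)) (by positivity)
    rw [Real.exp_le_exp]
    refine mul_le_mul_of_nonneg_left (mul_le_mul_of_nonneg_left ?_ (by positivity)) hM0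
    rw [Real.exp_le_exp]
    exact mul_le_mul_of_nonneg_left ht hη.le
  have hsq : ∀ x : ℝ, x ^ 2 ≤ τ ^ 2 * R → |x| ≤ (Real.sqrt R + 1) * τ := by
    intro x hx
    apply abs_le_of_sq_le_sq _ (by positivity)
    refine hx.trans ?_
    have := Real.sq_sqrt hR0
    have := Real.sqrt_nonneg R
    rw [mul_pow, mul_comm]
    apply mul_le_mul_of_nonneg_right _ (by positivity)
    nlinarith
  have s1 := Finset.single_le_sum (f := fun i => (u' i t - u i t) ^ 2)
      (fun _ _ => sq_nonneg _) (Finset.mem_univ i)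
  have s2 := Finset.single_le_sum (f := fun i => ((V' i t - V i t) * Real.exp (-η * t)) ^ 2)
      (fun _ _ => sq_nonneg _) (Finset.mem_univ i)
  have p1 : 0 ≤ ∑ i, (u' i t - u i t) ^ 2 := by positivity
  have p2 : 0 ≤ ∑ i, ((V' i t - V i t) * Real.exp (-η * t)) ^ 2 := by positivity
  refine ⟨hsq _ (by linarith), ?_⟩
  have := hsq ((V' i t - V i t) * Real.exp (-η * t)) (by linarith)
  rw [abs_mul, Real.abs_exp] at this
  have e : |V' i t - V i t| = (|V' i t - V i t| * Real.exp (-η * t)) * Real.exp (η * t) := by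
    rw [mul_assoc, ← Real.exp_add]; simp
  rw [e]
  exact mul_le_mul_of_nonneg_right this (Real.exp_pos _).le

end LSol

open Set MeasureTheory Filter Topology

namespace LSol
variable {N : ℕ} {A : Fin N → Fin N → ℝ} {b c c' : Fin N → ℝ}
    {u V u' V' : Fin N → ℝ → ℝ} {σ σ' : Fin N → ℝ}

lemma all_bound (hA : ∀ i j, 0 ≤ A i j) (hb : ∀ i, 0 < b i) (h : LSol A b c u V σ)
    (α : Fin N → ℝ) : ∃ T δ K η τ₀ : ℝ, 0 ≤ T ∧ 0 < δ ∧ 0 < K ∧ 0 < η ∧ 0 < τ₀ ∧ τ₀ ≤ 1 ∧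
    (∀ i, b i + δ ≤ ∑ j, A i j * V j T) ∧
    ∀ τ : ℝ, 0 < τ → τ ≤ τ₀ → ∀ u' V' σ', LSol A b (fun i => c i + τ * α i) u' V' σ' →
    (∀ i, b i + δ ≤ ∑ j, A i j * V' j T) ∧
    (∀ t ≤ T, ∀ i, |u' i t - u i t| ≤ K * τ ∧ |V' i t - V i t| ≤ K * τ * Real.exp (η * t)) ∧
    (∀ t, T ≤ t → ∀ i, |u' i t - u i t| ≤ K * τ * Real.exp (δ / 4 * t)) := by
  obtain ⟨T, δ, hT, hδ, hTδ⟩ := h.exists_T hA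
  obtain ⟨K, hK, η, hη, hηb, hleft⟩ := h.left_bound hA hb α T hT
  set a : ℝ := ∑ i, ∑ j, A i j with ha
  have ha0 : 0 ≤ a := Finset.sum_nonneg fun i _ => Finset.sum_nonneg fun j _ => hA i j
  have hai : ∀ i, ∑ j, A i j ≤ a := fun i =>
    Finset.single_le_sum (f := fun i => ∑ j, A i j)
      (fun i _ => Finset.sum_nonneg fun j _ => hA i j) (Finset.mem_univ i)
  set B : ℝ := a * (K * Real.exp (η * T)) + 1 with hB
  have hB0 : 0 < B := by positivity
  set C₁ : ℝ := ∑ i, Real.exp (u i T + b i * T) * Real.exp K * Real.exp (δ * T) with hC₁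
  have hC₁0 : 0 ≤ C₁ := by positivity
  have hC₁i : ∀ i, Real.exp (u i T + b i * T) * Real.exp K * Real.exp (δ * T) ≤ C₁ := fun i =>
    Finset.single_le_sum (f := fun i => Real.exp (u i T + b i * T) * Real.exp K * Real.exp (δ * T))
      (fun i _ => by positivity) (Finset.mem_univ i)
  set C : ℝ := 1 + C₁ with hC
  have hC0 : 0 < C := by positivity
  set M : ℝ := a + N with hM
  have hM0 : 0 ≤ M := by positivity
  set R : ℝ := (N * K ^ 2 + N * (K * Real.exp (η * T)) ^ 2) * Real.exp (M * (C / (δ / 4))) with hR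
  have hR0 : 0 ≤ R := by positivity
  refine ⟨T, δ, K + Real.sqrt R + 1, η, min 1 (δ / B), hT, hδ, by positivity, hη,
    by positivity, min_le_left _ _, fun i => by linarith [hTδ i], ?_⟩
  intro τ hτ hττ u' V' σ' h'
  have hτ1 : τ ≤ 1 := hττ.trans (min_le_left _ _)
  have hτB : τ * B ≤ δ := (le_div_iff₀ hB0).1 (hττ.trans (min_le_right _ _))
  have hL := hleft τ hτ hτ1 u' V' σ' h'
  have hKK : K ≤ K + Real.sqrt R + 1 := by linarith [Real.sqrt_nonneg R]
  have hm' : ∀ i, b i + δ ≤ ∑ j, A i j * V' j T := by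
    intro i
    have h1 : ∑ j, A i j * V j T - ∑ j, A i j * V' j T ≤ δ := by
      rw [← Finset.sum_sub_distrib]
      calc _ ≤ ∑ j, A i j * (K * τ * Real.exp (η * T)) := by
            refine Finset.sum_le_sum fun j _ => ?_
            rw [← mul_sub]
            refine mul_le_mul_of_nonneg_left ?_ (hA i j)
            have := (abs_le.1 (hL T le_rfl j).2).1
            linarith
        _ = (∑ j, A i j) * (K * τ * Real.exp (η * T)) := by rw [Finset.sum_mul]
        _ ≤ a * (K * τ * Real.exp (η * T)) := mul_le_mul_of_nonneg_right (hai i) (by positivity)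
        _ ≤ τ * B := by rw [hB]; linarith
        _ ≤ δ := hτB
    linarith [hTδ i]
  refine ⟨hm', ?_, ?_⟩
  · intro t ht i
    obtain ⟨e1, e2⟩ := hL t ht i
    refine ⟨e1.trans (mul_le_mul_of_nonneg_right hKK hτ.le), e2.trans ?_⟩
    exact mul_le_mul_of_nonneg_right (mul_le_mul_of_nonneg_right hKK hτ.le) (Real.exp_pos _).le
  · intro t ht i
    have hEle : ∀ i r, T ≤ r → max (Real.exp (u i r + b i * r)) (Real.exp (u' i r + b i * r)) ≤
        C₁ * Real.exp (-δ * r) := by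
      intro i r hr
      have e0 : Real.exp (u i T + b i * T) * Real.exp K * Real.exp (-δ * (r - T)) ≤
          C₁ * Real.exp (-δ * r) := by
        have : Real.exp (-δ * (r - T)) = Real.exp (δ * T) * Real.exp (-δ * r) := by
          rw [← Real.exp_add]; congr 1; ring
        rw [this, ← mul_assoc]
        exact mul_le_mul_of_nonneg_right (hC₁i i) (Real.exp_pos _).le
      refine le_trans (max_le ?_ ?_) e0
      · refine (h.E_decay hA i (δ := δ) (by linarith [hTδ i]) r hr).trans ?_
        refine mul_le_mul_of_nonneg_right ?_ (Real.exp_pos _).le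
        exact le_mul_of_one_le_right (Real.exp_pos _).le (Real.one_le_exp hK.le)
      · refine (h'.E_decay hA i (hm' i) r hr).trans ?_
        refine mul_le_mul_of_nonneg_right ?_ (Real.exp_pos _).le
        rw [← Real.exp_add, Real.exp_le_exp]
        have := (abs_le.1 (hL T le_rfl i).1).2
        have : K * τ ≤ K := mul_le_of_le_one_right hK.le hτ1
        linarith
    have key := gron hA (κ₁ := δ / 4) (κ₂ := 0)
      (ρ := fun r => -(C / (δ / 4)) * Real.exp (-(δ / 4) * r))
      (k := fun r => C * Real.exp (-(δ / 4) * r)) (by positivity) le_rfl ht (h.diff_u h') (h.diff_V h')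
      (fun r => (hasDerivAt_exp_mul _ _ r).congr_deriv (by field_simp))
      (fun r _ _ => by
        rw [zero_sub]; exact le_mul_of_one_le_left (Real.exp_pos _).le (by linarith))
      (fun i r hr _ => by
        have hr0 : 0 ≤ r := hT.trans hr
        have e1 := abs_exp_sub_le (u i r + b i * r) (u' i r + b i * r)
        have e4 : u' i r + b i * r - (u i r + b i * r) = u' i r - u i r := by ring
        rw [e4] at e1
        have e2 := hEle i r hr
        simp only [neg_zero, zero_mul, Real.exp_zero, mul_one]
        have e3 : C₁ * Real.exp (-δ * r) ≤ C * Real.exp (-(δ / 4) * r) * Real.exp (-(δ / 4) * r) := by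
          rw [mul_assoc, ← Real.exp_add]
          refine mul_le_mul (by linarith) ?_ (Real.exp_pos _).le hC0.le
          rw [Real.exp_le_exp]
          nlinarith [mul_nonneg hδ.le hr0]
        calc _ ≤ C₁ * Real.exp (-δ * r) * |u' i r - u i r| :=
              e1.trans (mul_le_mul_of_nonneg_right e2 (abs_nonneg _))
          _ ≤ C * Real.exp (-(δ / 4) * r) * Real.exp (-(δ / 4) * r) * |u' i r - u i r| :=
              mul_le_mul_of_nonneg_right e3 (abs_nonneg _)
          _ = _ := by ring)
    have hQT : (∑ i, ((u' i T - u i T) * Real.exp (-(δ / 4) * T)) ^ 2 +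
        ∑ i, ((V' i T - V i T) * Real.exp (-0 * T)) ^ 2) ≤
        τ ^ 2 * (N * K ^ 2 + N * (K * Real.exp (η * T)) ^ 2) := by
      have q1 : ∑ i, ((u' i T - u i T) * Real.exp (-(δ / 4) * T)) ^ 2 ≤ ∑ i : Fin N, (K * τ) ^ 2 := by
        refine Finset.sum_le_sum fun i _ => ?_
        rw [sq_le_sq, abs_mul, Real.abs_exp, abs_of_pos (mul_pos hK hτ)]
        refine le_trans (mul_le_of_le_one_right (abs_nonneg _) ?_) (hL T le_rfl i).1
        rw [Real.exp_le_one_iff]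
        have : 0 ≤ δ / 4 * T := by positivity
        linarith
      have q2 : ∑ i, ((V' i T - V i T) * Real.exp (-0 * T)) ^ 2 ≤
          ∑ i : Fin N, (K * τ * Real.exp (η * T)) ^ 2 := by
        refine Finset.sum_le_sum fun i _ => ?_
        have hp : 0 < K * τ * Real.exp (η * T) := by positivity
        rw [sq_le_sq, abs_of_pos hp]
        simpa using (hL T le_rfl i).2
      refine (add_le_add q1 q2).trans (le_of_eq ?_)
      simp; ring
    have hρ : -(C / (δ / 4)) * Real.exp (-(δ / 4) * t) - -(C / (δ / 4)) * Real.exp (-(δ / 4) * T)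
        ≤ C / (δ / 4) := by
      have z1 : 0 < C / (δ / 4) := by positivity
      have z2 : Real.exp (-(δ / 4) * T) ≤ 1 := by
        rw [Real.exp_le_one_iff]
        have : 0 ≤ δ / 4 * T := by positivity
        linarith
      nlinarith [Real.exp_pos (-(δ / 4) * t)]
    have hfin : (∑ i, ((u' i t - u i t) * Real.exp (-(δ / 4) * t)) ^ 2 +
        ∑ i, ((V' i t - V i t) * Real.exp (-0 * t)) ^ 2) ≤ τ ^ 2 * R := by
      refine key.trans ?_
      rw [hR, ← mul_assoc]
      refine mul_le_mul hQT ?_ (Real.exp_pos _).le (by positivity)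
      rw [Real.exp_le_exp]
      exact mul_le_mul_of_nonneg_left hρ hM0
    have s1 := Finset.single_le_sum (f := fun i => ((u' i t - u i t) * Real.exp (-(δ / 4) * t)) ^ 2)
      (fun _ _ => sq_nonneg _) (Finset.mem_univ i)
    have p2 : 0 ≤ ∑ i, ((V' i t - V i t) * Real.exp (-0 * t)) ^ 2 := by positivity
    have hx : ((u' i t - u i t) * Real.exp (-(δ / 4) * t)) ^ 2 ≤ (Real.sqrt R * τ) ^ 2 := by
      rw [mul_pow (Real.sqrt R), Real.sq_sqrt hR0]
      exact s1.trans ((le_add_of_nonneg_right p2).trans (hfin.trans (le_of_eq (mul_comm _ _))))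
    have hx2 := abs_le_of_sq_le_sq hx (by positivity)
    rw [abs_mul, Real.abs_exp] at hx2
    have e : |u' i t - u i t| = (|u' i t - u i t| * Real.exp (-(δ / 4) * t)) * Real.exp (δ / 4 * t) := by
      rw [mul_assoc, ← Real.exp_add]; simp
    rw [e]
    refine mul_le_mul_of_nonneg_right (hx2.trans ?_) (Real.exp_pos _).le
    exact mul_le_mul_of_nonneg_right (by linarith) hτ.le

end LSol

open Set MeasureTheory Filter Topology

namespace LSol
variable {N : ℕ} {A : Fin N → Fin N → ℝ} {b c c' : Fin N → ℝ}
    {u V u' V' : Fin N → ℝ → ℝ} {σ σ' : Fin N → ℝ}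

lemma B_deriv (hs : ∀ i j, A i j = A j i) (h : LSol A b c u V σ) (h' : LSol A b c' u' V' σ') (t : ℝ) :
    HasDerivAt (fun t => ∑ j, ((V' j t - V j t) * (u' j t - u j t) -
      (b j - ∑ k, A j k * V k t) * ((V' j t - V j t) ^ 2 * Real.exp (-(u j t + b j * t)))))
    (∑ j, Real.exp (u j t + b j * t) *
        (((Real.exp (u' j t - u j t) - 1) - (b j - ∑ k, A j k * V k t) *
          ((V' j t - V j t) * Real.exp (-(u j t + b j * t)))) ^ 2 +
        (Real.exp (u' j t - u j t) - 1) * ((u' j t - u j t) - (Real.exp (u' j t - u j t) - 1)))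
      + (1 / 2) * ∑ j, ∑ k, A j k * (Real.exp (u j t + b j * t) * Real.exp (u k t + b k * t) *
        ((V' j t - V j t) * Real.exp (-(u j t + b j * t)) -
         (V' k t - V k t) * Real.exp (-(u k t + b k * t))) ^ 2)) t := by
  have hF : ∀ j, HasDerivAt (fun t => Real.exp (-(u j t + b j * t)))
      (Real.exp (-(u j t + b j * t)) * (-(b j - ∑ k, A j k * V k t))) t := fun j =>
    (((h.hu j t).fun_add (hasDerivAt_lin (b j) t)).fun_neg.exp).congr_deriv (by ring)
  have hp : ∀ j, HasDerivAt (fun t => b j - ∑ k, A j k * V k t)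
      (-∑ k, A j k * Real.exp (u k t + b k * t)) t := fun j =>
    ((HasDerivAt.fun_sum fun k _ => (h.hV k t).const_mul (A j k)).const_sub (b j))
  refine (HasDerivAt.fun_sum (u := Finset.univ) fun j _ =>
    ((h.diff_V h' j t).fun_mul (h.diff_u h' j t)).fun_sub
      ((hp j).fun_mul (((h.diff_V h' j t).fun_pow 2).fun_mul (hF j)))).congr_deriv ?_
  set E : Fin N → ℝ := fun j => Real.exp (u j t + b j * t) with hE
  set g : Fin N → ℝ := fun j => (V' j t - V j t) * Real.exp (-(u j t + b j * t)) with hg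
  set p : Fin N → ℝ := fun j => b j - ∑ k, A j k * V k t with hp'
  set θ : Fin N → ℝ := fun j => Real.exp (u' j t - u j t) - 1 with hθ
  have hEF : ∀ j, Real.exp (u j t + b j * t) * Real.exp (-(u j t + b j * t)) = 1 := fun j => by
    rw [← Real.exp_add]; simp
  have hw : ∀ j, V' j t - V j t = E j * g j := fun j => by
    simp only [hE, hg]
    linear_combination (-(V' j t - V j t)) * hEF j
  have hE' : ∀ j, Real.exp (u' j t + b j * t) = E j * (θ j + 1) := fun j => by
    simp only [hE, hθ]
    rw [sub_add_cancel, ← Real.exp_add]; congr 1; ring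
  have e1 : ∑ j, ∑ k, A j k * (E j * E k * (g j - g k) ^ 2) =
      2 * ∑ j, ∑ k, A j k * (E j * E k * (g j ^ 2 - g j * g k)) := by
    have : ∑ j, ∑ k, A j k * (E j * E k * g k ^ 2) = ∑ j, ∑ k, A j k * (E j * E k * g j ^ 2) := by
      rw [Finset.sum_comm]
      refine Finset.sum_congr rfl fun i _ => Finset.sum_congr rfl fun j _ => ?_
      rw [hs j i]; ring
    have l : ∑ j, ∑ k, A j k * (E j * E k * (g j - g k) ^ 2) =
      ∑ j, ∑ k, A j k * (E j * E k * g j ^ 2) + ∑ j, ∑ k, A j k * (E j * E k * g k ^ 2)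
        - 2 * ∑ j, ∑ k, A j k * (E j * E k * (g j * g k)) := by
      rw [Finset.mul_sum, ← Finset.sum_add_distrib, ← Finset.sum_sub_distrib]
      refine Finset.sum_congr rfl fun i _ => ?_
      rw [Finset.mul_sum, ← Finset.sum_add_distrib, ← Finset.sum_sub_distrib]
      refine Finset.sum_congr rfl fun j _ => ?_
      ring
    have l2 : ∑ j, ∑ k, A j k * (E j * E k * (g j ^ 2 - g j * g k)) =
      ∑ j, ∑ k, A j k * (E j * E k * g j ^ 2)
        - ∑ j, ∑ k, A j k * (E j * E k * (g j * g k)) := by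
      rw [← Finset.sum_sub_distrib]
      refine Finset.sum_congr rfl fun i _ => ?_
      rw [← Finset.sum_sub_distrib]
      refine Finset.sum_congr rfl fun j _ => ?_
      ring
    rw [l, l2, this]; ring
  rw [e1, ← mul_assoc, show (1 / 2 : ℝ) * 2 = 1 by norm_num, one_mul, ← Finset.sum_add_distrib]
  refine Finset.sum_congr rfl fun j _ => ?_
  have e2 : ∑ k, A j k * (E j * E k * (g j ^ 2 - g j * g k)) =
      E j * g j ^ 2 * ∑ k, A j k * E k - E j * g j * ∑ k, A j k * (E k * g k) := by
    rw [Finset.mul_sum, Finset.mul_sum, ← Finset.sum_sub_distrib]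
    exact Finset.sum_congr rfl fun k _ => by ring
  have e3 : ∑ k, A j k * (V' k t - V k t) = ∑ k, A j k * (E k * g k) :=
    Finset.sum_congr rfl fun k _ => by rw [hw k]
  have e4 : ∑ k, A j k * Real.exp (u k t + b k * t) = ∑ k, A j k * E k := rfl
  rw [e2, e3, e4, hE']
  have f0 := hEF j
  rw [hw j]
  set X := ∑ k, A j k * (E k * g k)
  set Y := ∑ k, A j k * E k
  set F := Real.exp (-(u j t + b j * t))
  change E j * F = 1 at f0
  have hq : E j * g j * F = g j := by linear_combination g j * f0
  rw [hq]
  change (E j * (θ j + 1) - E j) * (u' j t - u j t) + E j * g j * -X -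
    (-Y * ((E j * g j) ^ 2 * F) + p j * ((2 : ℕ) * (E j * g j) ^ (2 - 1) * (E j * (θ j + 1) - E j) * F +
      (E j * g j) ^ 2 * (F * -(p j)))) =
    E j * ((θ j - p j * g j) ^ 2 + θ j * (u' j t - u j t - θ j)) + (E j * g j ^ 2 * Y - E j * g j * X)
  norm_num
  linear_combination (Y * E j * g j ^ 2 - 2 * p j * g j * E j * θ j + p j ^ 2 * E j * g j ^ 2) * f0

lemma B_lower (hA : ∀ i j, 0 ≤ A i j)
    {d p g E : Fin N → ℝ} (hE : ∀ j, 0 < E j) (hd : ∀ j, |d j| ≤ 1) {e D : ℝ}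
    (hEe : ∀ j, E j ≤ e) (hD : ∀ j, |d j| ≤ D) (j₀ k₀ : Fin N) :
    -(N * (2 * e * D ^ 3)) + (1 / 2) * (A j₀ k₀ * (E j₀ * E k₀ * (g j₀ - g k₀) ^ 2)) ≤
    (∑ j, E j * (((Real.exp (d j) - 1) - p j * g j) ^ 2 +
        (Real.exp (d j) - 1) * (d j - (Real.exp (d j) - 1)))
      + (1 / 2) * ∑ j, ∑ k, A j k * (E j * E k * (g j - g k) ^ 2)) := by
  have h0 : ∀ j k, 0 ≤ A j k * (E j * E k * (g j - g k) ^ 2) := fun j k =>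
    mul_nonneg (hA j k) (mul_nonneg (mul_nonneg (hE j).le (hE k).le) (sq_nonneg _))
  have h1 : A j₀ k₀ * (E j₀ * E k₀ * (g j₀ - g k₀) ^ 2) ≤
      ∑ j, ∑ k, A j k * (E j * E k * (g j - g k) ^ 2) :=
    (Finset.single_le_sum (f := fun k => A j₀ k * (E j₀ * E k * (g j₀ - g k) ^ 2))
      (fun k _ => h0 j₀ k) (Finset.mem_univ k₀)).trans
    (Finset.single_le_sum (f := fun j => ∑ k, A j k * (E j * E k * (g j - g k) ^ 2))
      (fun j _ => Finset.sum_nonneg fun k _ => h0 j k) (Finset.mem_univ j₀))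
  have h2 : ∑ j : Fin N, (-(2 * e * D ^ 3)) ≤ ∑ j, E j * (((Real.exp (d j) - 1) - p j * g j) ^ 2 +
        (Real.exp (d j) - 1) * (d j - (Real.exp (d j) - 1))) := by
    refine Finset.sum_le_sum fun j _ => ?_
    have a1 : |Real.exp (d j) - 1| ≤ 2 * |d j| := Real.abs_exp_sub_one_le (hd j)
    have a2 : |Real.exp (d j) - 1 - d j| ≤ (d j) ^ 2 := Real.abs_exp_sub_one_sub_id_le (hd j)
    have a3 : -((Real.exp (d j) - 1) * (d j - (Real.exp (d j) - 1))) ≤ 2 * D ^ 3 := by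
      calc _ ≤ |-((Real.exp (d j) - 1) * (d j - (Real.exp (d j) - 1)))| := le_abs_self _
        _ = |Real.exp (d j) - 1| * |Real.exp (d j) - 1 - d j| := by
            rw [abs_neg, abs_mul, abs_sub_comm (d j)]
        _ ≤ (2 * |d j|) * (d j) ^ 2 := mul_le_mul a1 a2 (abs_nonneg _) (by positivity)
        _ = 2 * |d j| ^ 3 := by rw [← sq_abs]; ring
        _ ≤ 2 * D ^ 3 := by
            have := pow_le_pow_left₀ (abs_nonneg (d j)) (hD j) 3
            linarith
    have hD0 : 0 ≤ 2 * D ^ 3 := by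
      have := (abs_nonneg (d j)).trans (hD j); positivity
    have a4 : E j * (2 * D ^ 3) ≤ e * (2 * D ^ 3) := mul_le_mul_of_nonneg_right (hEe j) hD0
    have a5 := mul_nonneg (hE j).le (sq_nonneg ((Real.exp (d j) - 1) - p j * g j))
    have a6 := mul_le_mul_of_nonneg_left a3 (hE j).le
    nlinarith
  rw [Finset.sum_const] at h2
  simp at h2
  linarith

lemma near_bot (hA : ∀ i j, 0 ≤ A i j) (hb : ∀ i, 0 < b i) (h : LSol A b c u V σ)
    (α : Fin N → ℝ) {T K η : ℝ} (hK : 0 < K) (hη : 0 < η) {ε : ℝ} (hε : 0 < ε) :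
    ∃ S ≤ T, ∃ τ₁ > 0, ∀ τ : ℝ, 0 < τ → τ ≤ τ₁ → ∀ u' V' σ',
    LSol A b (fun i => c i + τ * α i) u' V' σ' →
    (∀ t ≤ T, ∀ i, |u' i t - u i t| ≤ K * τ ∧ |V' i t - V i t| ≤ K * τ * Real.exp (η * t)) →
    ∀ t ≤ S, ∀ j, |(V' j t - V j t) - τ * (α j / b j) * Real.exp (u j t + b j * t)| ≤
      ε * τ * Real.exp (u j t + b j * t) := by
  set a : ℝ := ∑ i, ∑ j, A i j with ha
  have ha0 : 0 ≤ a := Finset.sum_nonneg fun i _ => Finset.sum_nonneg fun j _ => hA i j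
  have hai : ∀ i, ∑ j, A i j ≤ a := fun i =>
    Finset.single_le_sum (f := fun i => ∑ j, A i j)
      (fun i _ => Finset.sum_nonneg fun j _ => hA i j) (Finset.mem_univ i)
  obtain ⟨β, hβ, hβb⟩ := exists_lb hb
  set ε' := ε * β / 3 with hε'
  have hε'0 : 0 < ε' := by positivity
  have hm0 : ∀ j, Tendsto (fun t => ∑ k, A j k * V k t) atBot (𝓝 0) := fun j => by
    have := tendsto_finsetSum Finset.univ fun k _ => (h.V0 k).const_mul (A j k)
    simpa using this
  have ev : ∀ᶠ t in atBot, t ≤ T ∧ a * K / η * Real.exp (η * t) ≤ ε' ∧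
      ∀ j, |α j / b j| * (∑ k, A j k * V k t) ≤ ε' ∧ (∑ k, A j k * V k t) ≤ b j / 2 := by
    refine (eventually_le_atBot T).and (Eventually.and ?_ (eventually_all.2 fun j => Eventually.and ?_ ?_))
    · exact ((tendsto_exp_mul_atBot hη (a * K / η)).eventually (eventually_lt_nhds hε'0)).mono
        fun _ h => h.le
    · have := (hm0 j).const_mul (|α j / b j|)
      rw [mul_zero] at this
      exact (this.eventually (eventually_lt_nhds hε'0)).mono fun _ h => h.le
    · exact ((hm0 j).eventually (eventually_lt_nhds (half_pos (hb j)))).mono fun _ h => h.le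
  obtain ⟨S, hS⟩ := eventually_atBot.1 ev
  refine ⟨S, (hS S le_rfl).1, min (1 / K) (ε' / K ^ 2), by positivity, ?_⟩
  intro τ hτ hτ1 u' V' σ' h' hL t ht j
  have hKτ : K * τ ≤ 1 := by
    have := hτ1.trans (min_le_left _ _)
    rw [le_div_iff₀ hK] at this; linarith
  have hKτ2 : K ^ 2 * τ ≤ ε' := by
    have := hτ1.trans (min_le_right _ _)
    rw [le_div_iff₀ (by positivity)] at this; linarith
  have hd : ∀ t ≤ T, |u' j t - u j t - τ * α j| ≤ a * K / η * τ * Real.exp (η * t) := by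
    refine abs_le_of_deriv_atBot (fun t _ => (h.diff_u h' j t).sub_const _)
      (fun t _ => hasDerivAt_exp_mul (a * K / η * τ) η t) ?_ ?_ (tendsto_exp_mul_atBot hη _)
    · intro t ht
      rw [abs_neg]
      calc |∑ k, A j k * (V' k t - V k t)| ≤ ∑ k, |A j k * (V' k t - V k t)| :=
            Finset.abs_sum_le_sum_abs _ _
        _ ≤ ∑ k, A j k * (K * τ * Real.exp (η * t)) := by
            refine Finset.sum_le_sum fun k _ => ?_
            rw [abs_mul, abs_of_nonneg (hA j k)]
            exact mul_le_mul_of_nonneg_left (hL t ht k).2 (hA j k)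
        _ = (∑ k, A j k) * (K * τ * Real.exp (η * t)) := by rw [Finset.sum_mul]
        _ ≤ a * (K * τ * Real.exp (η * t)) := mul_le_mul_of_nonneg_right (hai j) (by positivity)
        _ = a * K / η * τ * η * Real.exp (η * t) := by field_simp
    · have := ((h'.u0 j).sub (h.u0 j)).sub_const (τ * α j)
      simpa using this
  refine abs_le_of_deriv_atBot (T := S) (h := fun t => ε * τ * Real.exp (u j t + b j * t))
    (fun t _ => (h.diff_V h' j t).fun_sub ((h.hE j t).const_mul (τ * (α j / b j))))
    (fun t _ => (h.hE j t).const_mul (ε * τ)) ?_ ?_ ?_ t ht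
  · intro t ht
    obtain ⟨tT, c1, c2⟩ := hS t ht
    obtain ⟨c3, c4⟩ := c2 j
    set E := Real.exp (u j t + b j * t) with hE
    have hE0 : 0 < E := Real.exp_pos _
    set m := ∑ k, A j k * V k t with hm
    have hmn : 0 ≤ m := h.m_nonneg hA j t
    set d := u' j t - u j t with hdd
    have d1 : |d| ≤ K * τ := (hL t tT j).1
    have e1 : Real.exp (u' j t + b j * t) = E * Real.exp d := by
      rw [hE, ← Real.exp_add]; congr 1; rw [hdd]; ring
    have q1 : |Real.exp d - 1 - d| ≤ d ^ 2 := Real.abs_exp_sub_one_sub_id_le (d1.trans hKτ)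
    have q2 : d ^ 2 ≤ ε' * τ := by
      calc d ^ 2 = |d| ^ 2 := (sq_abs d).symm
        _ ≤ (K * τ) ^ 2 := pow_le_pow_left₀ (abs_nonneg _) d1 2
        _ = (K ^ 2 * τ) * τ := by ring
        _ ≤ _ := mul_le_mul_of_nonneg_right hKτ2 hτ.le
    have q3 : |d - τ * α j| ≤ ε' * τ := by
      refine (hd t tT).trans ?_
      calc a * K / η * τ * Real.exp (η * t) = (a * K / η * Real.exp (η * t)) * τ := by ring
        _ ≤ _ := mul_le_mul_of_nonneg_right c1 hτ.le
    have q4 : |τ * (α j / b j) * m| ≤ ε' * τ := by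
      rw [abs_mul, abs_mul, abs_of_pos hτ, abs_of_nonneg hmn]
      nlinarith
    have e2 : E * Real.exp d - E - τ * (α j / b j) * (E * (b j - m)) =
        E * ((Real.exp d - 1 - d) + (d - τ * α j) + τ * (α j / b j) * m) := by
      have := hb j
      field_simp; ring
    rw [e1, e2, abs_mul, abs_of_pos hE0]
    have q5 : |(Real.exp d - 1 - d) + (d - τ * α j) + τ * (α j / b j) * m| ≤ ε * τ * (b j - m) := by
      have q6 : ε * τ * β ≤ ε * τ * (b j - m) :=
        mul_le_mul_of_nonneg_left (by linarith [hβb j]) (by positivity)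
      have q7 : ε * τ * β = ε' * τ + ε' * τ + ε' * τ := by rw [hε']; ring
      refine (abs_add_three _ _ _).trans ?_
      linarith
    calc E * _ ≤ E * (ε * τ * (b j - m)) := mul_le_mul_of_nonneg_left q5 hE0.le
      _ = _ := by ring
  · have := ((h'.V0 j).sub (h.V0 j)).sub ((h.E_tendsto_bot hA hb j).const_mul (τ * (α j / b j)))
    simpa using this
  · simpa using (h.E_tendsto_bot hA hb j).const_mul (ε * τ)

lemma near_top (hA : ∀ i j, 0 ≤ A i j) (h : LSol A b c u V σ) (h' : LSol A b c' u' V' σ')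
    {T₁ T δ K τ : ℝ} (hT : T₁ ≤ T) (hK : 0 < K) (hδ : 0 < δ) (hτ : 0 < τ)
    (hm : ∀ i, b i + δ ≤ ∑ j, A i j * V j T₁) (hm' : ∀ i, b i + δ ≤ ∑ j, A i j * V' j T₁)
    (hR : ∀ t, T₁ ≤ t → ∀ i, |u' i t - u i t| ≤ K * τ * Real.exp (δ / 4 * t))
    (hsmall : K * τ * Real.exp (δ / 4 * T) ≤ 1) (j : Fin N) :
    |V' j T - V j T| ≤ |σ' j - σ j| +
      (4 * K / δ) * τ * Real.exp (u j T + b j * T) * Real.exp (δ / 4 * T) := by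
  set E := Real.exp (u j T + b j * T) with hE
  have hE0 : 0 < E := Real.exp_pos _
  have key := abs_sub_le_of_deriv_atTop (T := T) (l := σ' j - σ j) (fun t _ => h.diff_V h' j t)
    (h := fun t => (4 * K / δ * τ * E * Real.exp (δ * T)) * Real.exp (-(3 * δ / 4) * t))
    (fun t _ => hasDerivAt_exp_mul _ _ t) ?_ ((h'.V1 j).sub (h.V1 j))
    (tendsto_exp_mul_atTop (by linarith) _)
  · have e : 4 * K / δ * τ * E * Real.exp (δ * T) * Real.exp (-(3 * δ / 4) * T) =
      (4 * K / δ) * τ * E * Real.exp (δ / 4 * T) := by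
      rw [mul_assoc _ (Real.exp (δ * T)), ← Real.exp_add]; congr 2; ring
    simp only [e] at key
    have := abs_sub_abs_le_abs_sub (V' j T - V j T) (σ' j - σ j)
    linarith
  · intro t ht
    have e1 := abs_exp_sub_le (u j t + b j * t) (u' j t + b j * t)
    have e4 : u' j t + b j * t - (u j t + b j * t) = u' j t - u j t := by ring
    rw [e4] at e1
    have hE' : Real.exp (u' j T + b j * T) ≤ 3 * E := by
      have h1 := (abs_le.1 ((hR T hT j).trans hsmall)).2
      calc Real.exp (u' j T + b j * T) ≤ Real.exp (1 + (u j T + b j * T)) := by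
            rw [Real.exp_le_exp]; linarith
        _ = Real.exp 1 * E := by rw [Real.exp_add]
        _ ≤ 3 * E := mul_le_mul_of_nonneg_right (by linarith [Real.exp_one_lt_d9]) hE0.le
    have hx := Real.exp_pos (-δ * (t - T))
    have e2 : max (Real.exp (u j t + b j * t)) (Real.exp (u' j t + b j * t)) ≤
        3 * E * Real.exp (-δ * (t - T)) := by
      refine max_le ?_ ?_
      · refine (h.E_decay hA j ((hm j).trans (h.m_mono hA j hT)) t ht).trans ?_
        exact mul_le_mul_of_nonneg_right (by linarith) hx.le
      · refine (h'.E_decay hA j ((hm' j).trans (h'.m_mono hA j hT)) t ht).trans ?_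
        exact mul_le_mul_of_nonneg_right hE' hx.le
    refine e1.trans ?_
    refine (mul_le_mul e2 (hR t (hT.trans ht) j) (abs_nonneg _) (by positivity)).trans (le_of_eq ?_)
    have e5 : Real.exp (-δ * (t - T)) * Real.exp (δ / 4 * t) =
        Real.exp (δ * T) * Real.exp (-(3 * δ / 4) * t) := by
      rw [← Real.exp_add, ← Real.exp_add]; congr 1; ring
    calc _ = 3 * E * K * τ * (Real.exp (-δ * (t - T)) * Real.exp (δ / 4 * t)) := by ring
      _ = _ := by rw [e5]; field_simp

end LSol

open Set MeasureTheory Filter Topology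

lemma growth {f f' : ℝ → ℝ} {S S₀ T M q : ℝ} (h1 : S ≤ S₀ - 1) (h2 : S₀ ≤ T)
    (hf : ∀ t, HasDerivAt f (f' t) t)
    (hM : ∀ t, S ≤ t → t ≤ T → -M ≤ f' t)
    (hq : ∀ t, S₀ - 1 ≤ t → t ≤ S₀ → -M + q ≤ f' t) :
    q ≤ f T - f S + M * (T - S) := by
  have a1 := mono_of_deriv (f := fun t => f t + M * t) h1
    (fun t _ _ => (hf t).fun_add (hasDerivAt_lin M t))
    (fun t ht ht' => by linarith [hM t ht (by linarith)])
  have a2 := mono_of_deriv (f := fun t => f t + (M - q) * t) (a := S₀ - 1) (c := S₀) (by linarith)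
    (fun t _ _ => (hf t).fun_add (hasDerivAt_lin (M - q) t))
    (fun t ht ht' => by linarith [hq t ht ht'])
  have a3 := mono_of_deriv (f := fun t => f t + M * t) h2
    (fun t _ _ => (hf t).fun_add (hasDerivAt_lin M t))
    (fun t ht ht' => by linarith [hM t (by linarith) ht'])
  linarith

lemma B_abs {N : ℕ} {w d p F W : Fin N → ℝ} {D P : ℝ} (hF : ∀ j, 0 < F j)
    (hw : ∀ j, |w j| ≤ W j) (hd : ∀ j, |d j| ≤ D) (hp : ∀ j, |p j| ≤ P) :
    |∑ j, (w j * d j - p j * (w j ^ 2 * F j))| ≤ ∑ j, (W j * D + P * (W j ^ 2 * F j)) := by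
  refine (Finset.abs_sum_le_sum_abs _ _).trans (Finset.sum_le_sum fun j _ => ?_)
  have h1 : |w j * d j| ≤ W j * D := by
    rw [abs_mul]
    exact mul_le_mul (hw j) (hd j) (abs_nonneg _) ((abs_nonneg _).trans (hw j))
  have h2 : |p j * (w j ^ 2 * F j)| ≤ P * (W j ^ 2 * F j) := by
    rw [abs_mul, abs_mul, abs_of_pos (hF j), abs_pow]
    refine mul_le_mul (hp j) ?_ (by have := hF j; positivity) ((abs_nonneg _).trans (hp j))
    exact mul_le_mul_of_nonneg_right (pow_le_pow_left₀ (abs_nonneg _) (hw j) 2) (hF j).le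
  exact (abs_sub _ _).trans (add_le_add h1 h2)

namespace LSol
variable {N : ℕ} {A : Fin N → Fin N → ℝ} {b c c' : Fin N → ℝ}
    {u V u' V' : Fin N → ℝ → ℝ} {σ σ' : Fin N → ℝ}

theorem core (hA : ∀ i j, 0 ≤ A i j) (hs : ∀ i j, A i j = A j i) (hb : ∀ i, 0 < b i)
    (h : LSol A b c u V σ) (α : Fin N → ℝ) (uu VV : ℝ → Fin N → ℝ → ℝ) (σσ : ℝ → Fin N → ℝ)
    (hfam : ∀ᶠ τ in 𝓝[>] (0 : ℝ), LSol A b (fun i => c i + τ * α i) (uu τ) (VV τ) (σσ τ))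
    (hσ : ∀ i, Tendsto (fun τ => (σσ τ i - σ i) / τ) (𝓝[>] (0 : ℝ)) (𝓝 0))
    (j₀ k₀ : Fin N) (hjk : A j₀ k₀ ≠ 0) : α j₀ / b j₀ = α k₀ / b k₀ := by
  by_contra hne
  have hA0 : 0 < A j₀ k₀ := lt_of_le_of_ne (hA j₀ k₀) (Ne.symm hjk)
  obtain ⟨γ, hγ⟩ : ∃ γ, γ = |α j₀ / b j₀ - α k₀ / b k₀| := ⟨_, rfl⟩
  have hγ0 : 0 < γ := by rw [hγ]; exact abs_pos.2 (sub_ne_zero.2 hne)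
  obtain ⟨T₁, δ, K, η, τ₀, hT₁, hδ, hK, hη, hτ₀, hτ₀1, hm, hall⟩ := h.all_bound hA hb α
  obtain ⟨ε, hε⟩ : ∃ ε, ε = min (γ / 4) 1 := ⟨_, rfl⟩
  have hε0 : 0 < ε := by rw [hε]; positivity
  have hεγ : ε ≤ γ / 4 := by rw [hε]; exact min_le_left _ _
  have hε1 : ε ≤ 1 := by rw [hε]; exact min_le_right _ _
  obtain ⟨S₀, hS₀, τ₁, hτ₁, hbot⟩ := h.near_bot hA hb α (T := T₁) hK hη hε0
  -- lower bound for the product of exponentials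
  obtain ⟨e₀, he₀, hE₀⟩ : ∃ e₀ : ℝ, 0 < e₀ ∧ ∀ t ∈ Icc (S₀ - 1) S₀,
      e₀ ≤ Real.exp (u j₀ t + b j₀ * t) * Real.exp (u k₀ t + b k₀ * t) := by
    obtain ⟨x, _, hx⟩ := (isCompact_Icc (a := S₀ - 1) (b := S₀)).exists_isMinOn
      (f := fun t => Real.exp (u j₀ t + b j₀ * t) * Real.exp (u k₀ t + b k₀ * t))
      ⟨S₀, by simp⟩
      (fun t _ => ((h.hE j₀ t).continuousAt.mul (h.hE k₀ t).continuousAt).continuousWithinAt)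
    exact ⟨_, by positivity, fun t ht => hx ht⟩
  obtain ⟨c₁, hc₁⟩ : ∃ c₁, c₁ = A j₀ k₀ * e₀ * γ ^ 2 / 8 := ⟨_, rfl⟩
  have hc₁0 : 0 < c₁ := by rw [hc₁]; positivity
  -- bound for p
  obtain ⟨P, hP0, hP⟩ : ∃ P : ℝ, 0 ≤ P ∧ ∀ j t, |b j - ∑ k, A j k * V k t| ≤ P := by
    have hσ0 : ∀ j, 0 ≤ σ j := fun j => (h.V_nonneg j 0).trans (h.V_le_sigma j 0)
    have hn : ∀ j, 0 ≤ b j + ∑ k, A j k * σ k := fun j =>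
      add_nonneg (hb j).le (Finset.sum_nonneg fun k _ => mul_nonneg (hA j k) (hσ0 k))
    refine ⟨∑ j, (b j + ∑ k, A j k * σ k), Finset.sum_nonneg fun j _ => hn j, fun j t => ?_⟩
    have h1 := Finset.single_le_sum (f := fun j => (b j + ∑ k, A j k * σ k)) (fun j _ => hn j)
      (Finset.mem_univ j)
    have h2 : ∑ k, A j k * V k t ≤ ∑ k, A j k * σ k :=
      Finset.sum_le_sum fun k _ => mul_le_mul_of_nonneg_left (h.V_le_sigma k t) (hA j k)
    have h3 := h.m_nonneg hA j t
    have h4 := hb j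
    rw [abs_le]; constructor <;> linarith
  -- choice of S
  obtain ⟨S, hSS, hS⟩ : ∃ S ≤ S₀ - 1,
      ∑ j, ((|α j / b j| + 1) * Real.exp (u j S + b j * S) * K +
        P * ((|α j / b j| + 1) ^ 2 * Real.exp (u j S + b j * S))) ≤ c₁ / 4 := by
    have ht : Tendsto (fun S => ∑ j, ((|α j / b j| + 1) * Real.exp (u j S + b j * S) * K +
        P * ((|α j / b j| + 1) ^ 2 * Real.exp (u j S + b j * S)))) atBot
        (𝓝 (∑ j, ((|α j / b j| + 1) * 0 * K + P * ((|α j / b j| + 1) ^ 2 * 0)))) :=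
      tendsto_finsetSum _ fun j _ => (((h.E_tendsto_bot hA hb j).const_mul _).mul_const _).add
        (((h.E_tendsto_bot hA hb j).const_mul _).const_mul _)
    simp only [mul_zero, zero_mul, add_zero, Finset.sum_const_zero] at ht
    obtain ⟨S, h1, h2⟩ := ((ht.eventually (eventually_lt_nhds (show 0 < c₁ / 4 by positivity))).and
      (eventually_le_atBot (S₀ - 1))).exists
    exact ⟨S, h2, h1.le⟩
  -- choice of T
  obtain ⟨T, hTT, hT⟩ : ∃ T ≥ T₁,
      ∑ j, ((4 * K / δ) * (Real.exp (u j T + b j * T) * Real.exp (δ / 4 * T) ^ 2) * K +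
        P * ((4 * K / δ) ^ 2 * (Real.exp (u j T + b j * T) * Real.exp (δ / 4 * T) ^ 2))) < c₁ / 2 := by
    have hEL : ∀ j, Tendsto (fun T => Real.exp (u j T + b j * T) * Real.exp (δ / 4 * T) ^ 2) atTop (𝓝 0) := by
      intro j
      refine squeeze_zero' (Eventually.of_forall fun _ => by positivity)
        (g := fun t => (Real.exp (u j T₁ + b j * T₁) * Real.exp (δ * T₁)) * Real.exp ((-(δ / 2)) * t)) ?_
        (tendsto_exp_mul_atTop (by linarith) _)
      filter_upwards [eventually_ge_atTop T₁] with s hs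
      have h1 := mul_le_mul_of_nonneg_right (h.E_decay hA j (hm j) s hs)
        (sq_nonneg (Real.exp (δ / 4 * s)))
      refine h1.trans (le_of_eq ?_)
      simp only [← Real.exp_nat_mul, ← Real.exp_add]
      congr 1; push_cast; ring
    have ht : Tendsto (fun T => ∑ j, ((4 * K / δ) * (Real.exp (u j T + b j * T) * Real.exp (δ / 4 * T) ^ 2) * K +
        P * ((4 * K / δ) ^ 2 * (Real.exp (u j T + b j * T) * Real.exp (δ / 4 * T) ^ 2)))) atTop
        (𝓝 (∑ j : Fin N, ((4 * K / δ) * 0 * K + P * ((4 * K / δ) ^ 2 * 0)))) :=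
      tendsto_finsetSum _ fun j _ => (((hEL j).const_mul _).mul_const _).add
        (((hEL j).const_mul _).const_mul _)
    simp only [mul_zero, zero_mul, add_zero, Finset.sum_const_zero] at ht
    obtain ⟨S, h1, h2⟩ := ((ht.eventually (eventually_lt_nhds (show 0 < c₁ / 2 by positivity))).and
      (eventually_ge_atTop T₁)).exists
    exact ⟨S, h2, h1⟩
  obtain ⟨L, hL⟩ : ∃ L, L = Real.exp (δ / 4 * T) := ⟨_, rfl⟩
  have hT0 : 0 ≤ T := hT₁.trans hTT
  have hL1 : 1 ≤ L := by rw [hL]; exact Real.one_le_exp (by positivity)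
  obtain ⟨e, he⟩ : ∃ e, e = ∑ j, Real.exp (c j) * Real.exp (b j * T) := ⟨_, rfl⟩
  have hEe : ∀ t ≤ T, ∀ j, Real.exp (u j t + b j * t) ≤ e := by
    intro t ht j
    have h1 := Finset.single_le_sum (f := fun j => Real.exp (c j) * Real.exp (b j * T))
      (fun j _ => by positivity) (Finset.mem_univ j)
    rw [he]
    refine (h.E_le hA j t).trans (le_trans ?_ h1)
    refine mul_le_mul_of_nonneg_left ?_ (Real.exp_pos _).le
    rw [Real.exp_le_exp]
    exact mul_le_mul_of_nonneg_left ht (hb j).le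
  obtain ⟨M, hM⟩ : ∃ M, M = N * (2 * e * (K * L) ^ 3) := ⟨_, rfl⟩
  -- the eventual conditions
  have evT : ∀ᶠ τ in 𝓝[>] (0 : ℝ),
      ∑ j, ((|(σσ τ j - σ j) / τ| + (4 * K / δ) * Real.exp (u j T + b j * T) * L) * (K * L) +
        P * ((|(σσ τ j - σ j) / τ| + (4 * K / δ) * Real.exp (u j T + b j * T) * L) ^ 2 *
          Real.exp (-(u j T + b j * T)))) < c₁ / 2 := by
    have ht : Tendsto (fun τ => ∑ j, ((|(σσ τ j - σ j) / τ| + (4 * K / δ) * Real.exp (u j T + b j * T) * L) * (K * L) +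
        P * ((|(σσ τ j - σ j) / τ| + (4 * K / δ) * Real.exp (u j T + b j * T) * L) ^ 2 *
          Real.exp (-(u j T + b j * T))))) (𝓝[>] (0 : ℝ))
        (𝓝 (∑ j, ((|0| + (4 * K / δ) * Real.exp (u j T + b j * T) * L) * (K * L) +
        P * ((|0| + (4 * K / δ) * Real.exp (u j T + b j * T) * L) ^ 2 *
          Real.exp (-(u j T + b j * T)))))) :=
      tendsto_finsetSum _ fun j _ => (((hσ j).abs.add_const _).mul_const _).add
        (((((hσ j).abs.add_const _).pow 2).mul_const _).const_mul _)
    refine ht.eventually (eventually_lt_nhds (lt_of_eq_of_lt ?_ hT))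
    refine Finset.sum_congr rfl fun j _ => ?_
    have hEF : Real.exp (u j T + b j * T) * Real.exp (-(u j T + b j * T)) = 1 := by
      rw [← Real.exp_add]; simp
    rw [abs_zero, ← hL]
    linear_combination (P * (4 * K / δ) ^ 2 * L ^ 2 * Real.exp (u j T + b j * T)) * hEF
  have evlin : ∀ (C ε : ℝ), 0 < ε → ∀ᶠ τ in 𝓝[>] (0 : ℝ), C * τ ≤ ε := by
    intro C ε hε
    have : Tendsto (fun τ : ℝ => C * τ) (𝓝[>] (0 : ℝ)) (𝓝 (C * 0)) :=
      (tendsto_id.mono_left nhdsWithin_le_nhds).const_mul C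
    rw [mul_zero] at this
    exact (this.eventually (eventually_lt_nhds hε)).mono fun _ h => h.le
  obtain ⟨τ, hτ, h', hBT, l1, l2, l3, l4⟩ := (((eventually_mem_nhdsWithin : ∀ᶠ τ in 𝓝[>] (0 : ℝ), τ ∈ Ioi (0 : ℝ))).and
    (hfam.and (evT.and ((evlin 1 τ₀ hτ₀).and ((evlin 1 τ₁ hτ₁).and ((evlin (K * L) 1 one_pos).and
      (evlin (M * (T - S)) (c₁ / 8) (by positivity)))))))).exists
  change 0 < τ at hτ
  rw [one_mul] at l1 l2
  obtain ⟨hm', hleft, hright⟩ := hall τ hτ l1 _ _ _ h'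
  have hg := hbot τ hτ l2 _ _ _ h' hleft
  have hd : ∀ t ≤ T, ∀ j, |uu τ j t - u j t| ≤ K * L * τ := by
    intro t ht j
    rcases le_total t T₁ with h1 | h1
    · refine (hleft t h1 j).1.trans ?_
      rw [mul_right_comm]
      exact le_mul_of_one_le_right (by positivity) hL1
    · refine (hright t h1 j).trans ?_
      rw [mul_right_comm K L]
      refine mul_le_mul_of_nonneg_left ?_ (by positivity)
      rw [hL, Real.exp_le_exp]
      exact mul_le_mul_of_nonneg_left ht (by positivity)
  have hlow : ∀ t ≤ T, _ := fun t ht => B_lower hA (d := fun j => uu τ j t - u j t)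
    (p := fun j => b j - ∑ k, A j k * V k t)
    (g := fun j => (VV τ j t - V j t) * Real.exp (-(u j t + b j * t)))
    (E := fun j => Real.exp (u j t + b j * t)) (fun j => Real.exp_pos _)
    (fun j => (hd t ht j).trans l3) (hEe t ht) (hd t ht) j₀ k₀
  have hMτ : N * (2 * e * (K * L * τ) ^ 3) = M * τ ^ 3 := by rw [hM]; ring
  have hgrow := growth (q := c₁ * τ ^ 2) (M := M * τ ^ 3) hSS (hS₀.trans hTT)
    (fun t => h.B_deriv hs h' t) ?_ ?_
  · -- contradiction
    have hBS := B_abs (w := fun j => VV τ j S - V j S) (d := fun j => uu τ j S - u j S)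
      (p := fun j => b j - ∑ k, A j k * V k S) (F := fun j => Real.exp (-(u j S + b j * S)))
      (W := fun j => (|α j / b j| + 1) * τ * Real.exp (u j S + b j * S))
      (D := K * τ) (P := P) (fun j => Real.exp_pos _) (fun j => by
        have h1 := hg S (by linarith) j
        have h2 : |τ * (α j / b j) * Real.exp (u j S + b j * S)| =
            |α j / b j| * τ * Real.exp (u j S + b j * S) := by
          rw [abs_mul, abs_mul, abs_of_pos hτ, Real.abs_exp]; ring
        have h3 := abs_sub_abs_le_abs_sub (VV τ j S - V j S) (τ * (α j / b j) * Real.exp (u j S + b j * S))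
        have h4 : ε * τ * Real.exp (u j S + b j * S) ≤ 1 * τ * Real.exp (u j S + b j * S) := by
          gcongr
        linarith) (fun j => (hleft S (by linarith) j).1) (fun j => hP j S)
    have hBS2 : ∑ j, ((|α j / b j| + 1) * τ * Real.exp (u j S + b j * S) * (K * τ) +
        P * (((|α j / b j| + 1) * τ * Real.exp (u j S + b j * S)) ^ 2 * Real.exp (-(u j S + b j * S)))) =
        τ ^ 2 * ∑ j, ((|α j / b j| + 1) * Real.exp (u j S + b j * S) * K +
        P * ((|α j / b j| + 1) ^ 2 * Real.exp (u j S + b j * S))) := by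
      rw [Finset.mul_sum]
      refine Finset.sum_congr rfl fun j _ => ?_
      have hEF : Real.exp (u j S + b j * S) * Real.exp (-(u j S + b j * S)) = 1 := by
        rw [← Real.exp_add]; simp
      linear_combination (P * (|α j / b j| + 1) ^ 2 * τ ^ 2 * Real.exp (u j S + b j * S)) * hEF
    have hBT1 := B_abs (w := fun j => VV τ j T - V j T) (d := fun j => uu τ j T - u j T)
      (p := fun j => b j - ∑ k, A j k * V k T) (F := fun j => Real.exp (-(u j T + b j * T)))
      (W := fun j => τ * (|(σσ τ j - σ j) / τ| + (4 * K / δ) * Real.exp (u j T + b j * T) * L))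
      (D := K * L * τ) (P := P) (fun j => Real.exp_pos _) (fun j => by
        have h1 := h.near_top hA h' hTT hK hδ hτ hm hm' hright (by rw [← hL]; linarith) j
        refine h1.trans (le_of_eq ?_)
        rw [abs_div, abs_of_pos hτ, ← hL]
        field_simp) (fun j => hd T le_rfl j) (fun j => hP j T)
    have hBT2 : ∑ j, (τ * (|(σσ τ j - σ j) / τ| + (4 * K / δ) * Real.exp (u j T + b j * T) * L) * (K * L * τ) +
        P * ((τ * (|(σσ τ j - σ j) / τ| + (4 * K / δ) * Real.exp (u j T + b j * T) * L)) ^ 2 *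
          Real.exp (-(u j T + b j * T)))) = τ ^ 2 *
        ∑ j, ((|(σσ τ j - σ j) / τ| + (4 * K / δ) * Real.exp (u j T + b j * T) * L) * (K * L) +
        P * ((|(σσ τ j - σ j) / τ| + (4 * K / δ) * Real.exp (u j T + b j * T) * L) ^ 2 *
          Real.exp (-(u j T + b j * T)))) := by
      rw [Finset.mul_sum]
      exact Finset.sum_congr rfl fun j _ => by ring
    rw [hBS2] at hBS
    rw [hBT2] at hBT1
    have hτ2 : 0 < τ ^ 2 := by positivity
    have r1 := mul_le_mul_of_nonneg_left hS hτ2.le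
    have r2 := mul_lt_mul_of_pos_left hBT hτ2
    have r3 := mul_le_mul_of_nonneg_left l4 hτ2.le
    have r4 := (abs_le.1 hBS).1
    have r5 := (abs_le.1 hBT1).2
    have r6 : M * τ ^ 3 * (T - S) = τ ^ 2 * (M * (T - S) * τ) := by ring
    rw [r6] at hgrow
    have r7 : 0 < τ ^ 2 * c₁ := by positivity
    linarith
  · intro t _ ht
    refine le_trans ?_ (hlow t ht)
    rw [hMτ]
    have : 0 ≤ (1 / 2) * (A j₀ k₀ * (Real.exp (u j₀ t + b j₀ * t) * Real.exp (u k₀ t + b k₀ * t) *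
      ((VV τ j₀ t - V j₀ t) * Real.exp (-(u j₀ t + b j₀ * t)) -
         (VV τ k₀ t - V k₀ t) * Real.exp (-(u k₀ t + b k₀ * t))) ^ 2)) := by positivity
    linarith
  · intro t ht1 ht2
    refine le_trans ?_ (hlow t (ht2.trans (hS₀.trans hTT)))
    rw [hMτ]
    refine add_le_add_right ?_ _
    have hgj : ∀ j, |(VV τ j t - V j t) * Real.exp (-(u j t + b j * t)) - τ * (α j / b j)| ≤ γ / 4 * τ := by
      intro j
      have hEF : Real.exp (u j t + b j * t) * Real.exp (-(u j t + b j * t)) = 1 := by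
        rw [← Real.exp_add]; simp
      have h1 := mul_le_mul_of_nonneg_right (hg t ht2 j) (Real.exp_pos (-(u j t + b j * t))).le
      have h2 : (VV τ j t - V j t) * Real.exp (-(u j t + b j * t)) - τ * (α j / b j) =
        ((VV τ j t - V j t) - τ * (α j / b j) * Real.exp (u j t + b j * t)) *
          Real.exp (-(u j t + b j * t)) := by
        linear_combination (τ * (α j / b j)) * hEF
      rw [h2, abs_mul, Real.abs_exp]
      refine h1.trans ?_
      rw [mul_assoc, hEF, mul_one]
      exact mul_le_mul_of_nonneg_right hεγ hτ.le
    have g1 := hgj j₀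
    have g2 := hgj k₀
    set x := (VV τ j₀ t - V j₀ t) * Real.exp (-(u j₀ t + b j₀ * t))
    set y := (VV τ k₀ t - V k₀ t) * Real.exp (-(u k₀ t + b k₀ * t))
    have g3 : γ / 2 * τ ≤ |x - y| := by
      have g4 : τ * γ = |(x - y) - (x - τ * (α j₀ / b j₀)) + (y - τ * (α k₀ / b k₀))| := by
        have q : τ * γ = |τ * (α j₀ / b j₀ - α k₀ / b k₀)| := by rw [hγ, abs_mul, abs_of_pos hτ]
        rw [q]; congr 1; ring
      have g5 := abs_add_le ((x - y) - (x - τ * (α j₀ / b j₀))) (y - τ * (α k₀ / b k₀))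
      have g6 := abs_sub (x - y) (x - τ * (α j₀ / b j₀))
      linarith
    have g7 : (γ / 2 * τ) ^ 2 ≤ (x - y) ^ 2 := by
      rw [← sq_abs (x - y)]
      exact pow_le_pow_left₀ (by positivity) g3 2
    have g8 := mul_le_mul (hE₀ t ⟨ht1, ht2⟩) g7 (by positivity) (by positivity)
    have g9 := mul_le_mul_of_nonneg_left g8 hA0.le
    rw [hc₁]
    linarith

end LSol

open Set MeasureTheory Filter Topology

lemma lim_zero_of_mono {u m : ℝ → ℝ} {c : ℝ} (hu : ∀ t, HasDerivAt u (-m t) t) (hm : Monotone m)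
    (h0 : Tendsto u atBot (𝓝 c)) : Tendsto m atBot (𝓝 0) := by
  have a1 : ∀ t, u (t - 1) - u t ≤ m t := fun t => by
    have := mono_of_deriv (f := fun s => u s + m t * s) (a := t - 1) (c := t) (by linarith)
      (fun s _ _ => (hu s).fun_add (hasDerivAt_lin (m t) s)) (fun s _ hs => by linarith [hm hs])
    linarith
  have a2 : ∀ t, m t ≤ u t - u (t + 1) := fun t => by
    have := mono_of_deriv (f := fun s => -u s - m t * s) (a := t) (c := t + 1) (by linarith)
      (fun s _ _ => (hu s).fun_neg.fun_sub (hasDerivAt_lin (m t) s)) (fun s hs _ => by linarith [hm hs])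
    linarith
  have t1 : Tendsto (fun t : ℝ => u (t - 1) - u t) atBot (𝓝 0) := by
    simpa [← sub_eq_add_neg] using (h0.comp (tendsto_atBot_add_const_right atBot (-1) tendsto_id)).sub h0
  have t2 : Tendsto (fun t : ℝ => u t - u (t + 1)) atBot (𝓝 0) := by
    simpa using h0.sub (h0.comp (tendsto_atBot_add_const_right atBot 1 tendsto_id))
  exact tendsto_of_tendsto_of_tendsto_of_le_of_le t1 t2 a1 a2

lemma hasDerivAt_deriv_of_contDiffAt {f : ℝ → ℝ} {x : ℝ} (h : ContDiffAt ℝ 2 f x) :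
    HasDerivAt (deriv f) (deriv (deriv f) x) x := by
  have h1 : ContDiffAt ℝ 1 (fderiv ℝ f) x := h.fderiv_right (by norm_num)
  have h2 : DifferentiableAt ℝ (fun y => fderiv ℝ f y 1) x :=
    (h1.differentiableAt (by norm_num)).clm_apply (differentiableAt_const 1)
  exact DifferentiableAt.hasDerivAt h2

theorem radial_LSol {N : ℕ} (A : Matrix (Fin N) (Fin N) ℝ) (β : Fin N → ℝ) (hA : H1 A)
    (U : Fin N → ℝ → ℝ) (hU : RadialSolution A β U)
    (hc : ∀ i, ContinuousWithinAt (U i) (Set.Ici 0) 0) :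
    ∃ V, LSol (fun i j => A i j) (fun i => β i + 2) (fun i => U i 0)
      (fun i t => U i (Real.exp t)) V (energy β U) := by
  obtain ⟨hC, heq, hint⟩ := hU
  obtain ⟨-, hpos, -, hdet⟩ := hA
  set u : Fin N → ℝ → ℝ := fun i t => U i (Real.exp t) with hu
  set m : Fin N → ℝ → ℝ := fun i t => -(deriv (U i) (Real.exp t) * Real.exp t) with hm
  have hu' : ∀ i t, HasDerivAt (u i) (-m i t) t := by
    intro i t
    have h1 : HasDerivAt (U i) (deriv (U i) (Real.exp t)) (Real.exp t) :=
      ((hC i _ (Real.exp_pos t)).differentiableAt (by norm_num)).hasDerivAt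
    have := h1.comp t (Real.hasDerivAt_exp t)
    exact this.congr_deriv (neg_neg _).symm
  have hE : ∀ i t, Real.exp (u i t + (β i + 2) * t) =
      Real.exp t ^ 2 * (Real.exp t ^ β i * Real.exp (U i (Real.exp t))) := by
    intro i t
    rw [← Real.exp_mul, ← Real.exp_nat_mul, ← Real.exp_add, ← Real.exp_add]
    congr 1; simp only [hu]; push_cast; ring
  have hm' : ∀ i t, HasDerivAt (m i) (∑ j, A i j * Real.exp (u j t + (β j + 2) * t)) t := by
    intro i t
    have h1 := (hasDerivAt_deriv_of_contDiffAt (hC i _ (Real.exp_pos t))).comp t (Real.hasDerivAt_exp t)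
    have h2 := (h1.mul (Real.hasDerivAt_exp t)).neg
    refine h2.congr_deriv ?_
    have h3 := heq i _ (Real.exp_pos t)
    have h4 : ∑ j, A i j * Real.exp (u j t + (β j + 2) * t) =
        Real.exp t ^ 2 * ∑ j, A i j * Real.exp t ^ β j * Real.exp (U j (Real.exp t)) := by
      rw [Finset.mul_sum]
      exact Finset.sum_congr rfl fun j _ => by rw [hE]; ring
    rw [h4]
    have h5 : Real.exp t ≠ 0 := (Real.exp_pos t).ne'
    have h6 : Real.exp t * (1 / Real.exp t) = 1 := by field_simp
    simp only [Function.comp]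
    linear_combination (-Real.exp t ^ 2) * h3 + Real.exp t * deriv (U i) (Real.exp t) * h6
  have hmono : ∀ i, Monotone (m i) := fun i _ _ hst =>
    mono_of_deriv hst (fun s _ _ => hm' i s)
      (fun s _ _ => Finset.sum_nonneg fun j _ => mul_nonneg (hpos i j) (Real.exp_pos _).le)
  have hu0 : ∀ i, Tendsto (u i) atBot (𝓝 (U i 0)) := by
    intro i
    have h1 : Tendsto Real.exp atBot (𝓝[Ici 0] 0) :=
      tendsto_nhdsWithin_iff.2 ⟨Real.tendsto_exp_atBot, Eventually.of_forall fun t => (Real.exp_pos t).le⟩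
    exact (hc i).tendsto.comp h1
  have hm0 : ∀ i, Tendsto (m i) atBot (𝓝 0) := fun i => lim_zero_of_mono (hu' i) (hmono i) (hu0 i)
  set V : Fin N → ℝ → ℝ := fun i t => ∑ j, A⁻¹ i j * m j t with hV
  have hAV : ∀ i t, ∑ j, A i j * V j t = m i t := by
    intro i t
    have h1 : A.mulVec (A⁻¹.mulVec (fun j => m j t)) = fun j => m j t := by
      rw [Matrix.mulVec_mulVec, Matrix.mul_nonsing_inv _ hdet, Matrix.one_mulVec]
    exact congrFun h1 i
  have hV' : ∀ i t, HasDerivAt (V i) (Real.exp (u i t + (β i + 2) * t)) t := by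
    intro i t
    refine (HasDerivAt.fun_sum fun j _ => (hm' j t).const_mul (A⁻¹ i j)).congr_deriv ?_
    have h1 : A⁻¹.mulVec (A.mulVec (fun j => Real.exp (u j t + (β j + 2) * t))) =
        fun j => Real.exp (u j t + (β j + 2) * t) := by
      rw [Matrix.mulVec_mulVec, Matrix.nonsing_inv_mul _ hdet, Matrix.one_mulVec]
    exact congrFun h1 i
  have hV0 : ∀ i, Tendsto (V i) atBot (𝓝 0) := fun i => by
    have := tendsto_finsetSum Finset.univ fun j _ => (hm0 j).const_mul (A⁻¹ i j)
    simpa using this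
  have hV1 : ∀ i, Tendsto (V i) atTop (𝓝 (energy β U i)) := by
    intro i
    set W : ℝ → ℝ := fun r => if r ≤ 0 then 0 else V i (Real.log r) with hW
    have hWe : ∀ r, 0 < r → W =ᶠ[𝓝 r] fun r => V i (Real.log r) := fun r hr => by
      filter_upwards [lt_mem_nhds hr] with s hs
      simp [hW, not_le.2 hs]
    have hWd : ∀ r ∈ Ioi (0 : ℝ), HasDerivAt W (r ^ (β i + 1) * Real.exp (U i r)) r := by
      intro r hr
      have hr0 : 0 < r := hr
      have h1 := ((hV' i (Real.log r)).comp r (Real.hasDerivAt_log hr0.ne')).congr_of_eventuallyEq (hWe r hr0)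
      refine h1.congr_deriv ?_
      rw [hE, Real.exp_log hr0, Real.rpow_add_one hr0.ne']
      field_simp
    have hWt : Tendsto W atTop (𝓝 (limUnder atTop W)) :=
      tendsto_limUnder_of_hasDerivAt_of_integrableOn_Ioi hWd (hint i)
    have hWc : ContinuousWithinAt W (Ici 0) 0 := by
      rw [← continuousWithinAt_Ioi_iff_Ici]
      have h0 : W 0 = 0 := by simp [hW]
      rw [ContinuousWithinAt, h0]
      refine ((hV0 i).comp Real.tendsto_log_nhdsGT_zero).congr' ?_
      filter_upwards [self_mem_nhdsWithin] with s hs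
      simp [hW, not_le.2 (show (0:ℝ) < s from hs)]
    have hI := integral_Ioi_of_hasDerivAt_of_tendsto hWc hWd (hint i) hWt
    have h0 : W 0 = 0 := by simp [hW]
    rw [h0, sub_zero] at hI
    rw [← hI] at hWt
    refine (hWt.comp Real.tendsto_exp_atTop).congr fun t => ?_
    simp [hW, not_le.2 (Real.exp_pos t)]
  exact ⟨V, fun i t => by rw [hAV]; exact hu' i t, hV', hu0, hV0, hV1⟩

open Set MeasureTheory Filter Topology

theorem jacobian_of_energy_map_nonsingular {n : ℕ}
    (A : Matrix (Fin (n + 1)) (Fin (n + 1)) ℝ) (β : Fin (n + 1) → ℝ)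
    (hA : H1 A) (hβ : ∀ i, -2 < β i)
    -- c₀ is a point of Π₁, V a neighborhood of c₀ on which a differentiable
    -- family of finite-energy radial solutions is given
    (c₀ : Fin n → ℝ) (V : Set (Fin n → ℝ)) (hV : IsOpen V) (hc₀V : c₀ ∈ V)
    (U : (Fin n → ℝ) → Fin (n + 1) → ℝ → ℝ)
    (hUsol : ∀ c ∈ V, RadialSolution A β (U c))
    (hUcont0 : ∀ c ∈ V, ∀ i, ContinuousWithinAt (U c i) (Set.Ici 0) 0)
    (hUinit : ∀ c ∈ V, ∀ j : Fin n, U c j.castSucc 0 = c j)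
    (hUlast : ∀ c ∈ V, U c (Fin.last n) 0 = 0)
    (σ : (Fin n → ℝ) → Fin (n + 1) → ℝ)
    (hσ : ∀ c ∈ V, ∀ i, σ c i = energy β (U c) i)
    (hdiff : ∀ i, DifferentiableAt ℝ (fun c => σ c i) c₀) :
    (Matrix.of fun i j : Fin n =>
        fderiv ℝ (fun c => σ c i.castSucc) c₀ (Pi.single j 1)).det ≠ 0 := by
  classical
  intro hdet
  have hA' := hA
  obtain ⟨hsym, hpos, hirr, hunit⟩ := hA'
  have hs : ∀ i j, A i j = A j i := fun i j => (hsym.apply i j).symm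
  obtain ⟨α, hα, hMα⟩ := Matrix.exists_mulVec_eq_zero_iff.2 hdet
  have hb : ∀ i, 0 < β i + 2 := fun i => by linarith [hβ i]
  have hL0 : ∀ i : Fin n, fderiv ℝ (fun c => σ c i.castSucc) c₀ α = 0 := by
    intro i
    have h1 := congrFun hMα i
    have h2 : α = ∑ j, α j • (Pi.single j (1 : ℝ) : Fin n → ℝ) := by
      ext k; simp [Finset.sum_apply, Pi.single_apply]
    rw [h2, map_sum]
    simp only [map_smul, smul_eq_mul]
    simp only [Matrix.mulVec, dotProduct, Matrix.of_apply, Pi.zero_apply] at h1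
    rw [← h1]
    exact Finset.sum_congr rfl fun j _ => mul_comm _ _
  have hline : HasDerivAt (fun τ : ℝ => c₀ + τ • α) α 0 := by
    simpa using ((hasDerivAt_id (0 : ℝ)).smul_const α).const_add c₀
  have hline0 : c₀ + (0 : ℝ) • α = c₀ := by simp
  have hder : ∀ i, HasDerivAt (fun τ : ℝ => σ (c₀ + τ • α) i)
      (fderiv ℝ (fun c => σ c i) c₀ α) 0 := by
    intro i
    have h1 : HasFDerivAt (fun c => σ c i) (fderiv ℝ (fun c => σ c i) c₀) (c₀ + (0 : ℝ) • α) := by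
      rw [hline0]; exact (hdiff i).hasFDerivAt
    exact h1.comp_hasDerivAt (0 : ℝ) hline
  have hev : ∀ᶠ τ : ℝ in 𝓝 0, c₀ + τ • α ∈ V := by
    have h1 : ContinuousAt (fun τ : ℝ => c₀ + τ • α) 0 := hline.continuousAt
    exact h1.eventually (by beta_reduce; rw [hline0]; exact hV.mem_nhds hc₀V)
  have hLS : ∀ c ∈ V, ∃ W, LSol (fun i j => A i j) (fun i => β i + 2)
      (Fin.snoc (α := fun _ => ℝ) c 0) (fun i t => U c i (Real.exp t)) W (σ c) := by
    intro c hc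
    obtain ⟨W, hW⟩ := radial_LSol A β hA (U c) (hUsol c hc) (hUcont0 c hc)
    have e1 : (fun i => U c i 0) = (Fin.snoc (α := fun _ => ℝ) c 0) := by
      ext i
      refine Fin.lastCases ?_ (fun j => ?_) i
      · simp [hUlast c hc]
      · simp [hUinit c hc]
    have e2 : energy β (U c) = σ c := by ext i; exact (hσ c hc i).symm
    rw [e1, e2] at hW
    exact ⟨W, hW⟩
  -- derivative of the last component vanishes
  obtain ⟨W₀, hW₀⟩ := hLS c₀ hc₀V
  have hpoh : (fun τ : ℝ => ∑ i, (β i + 2) * σ (c₀ + τ • α) i) =ᶠ[𝓝 0]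
      fun τ => (1 / 2) * ∑ i, ∑ j, A i j * σ (c₀ + τ • α) i * σ (c₀ + τ • α) j := by
    filter_upwards [hev] with τ hτ
    obtain ⟨W, hW⟩ := hLS _ hτ
    exact hW.pohozaev hpos hs hb
  have hall : ∀ i, fderiv ℝ (fun c => σ c i) c₀ α = 0 := by
    have d1 : HasDerivAt (fun τ : ℝ => ∑ i, (β i + 2) * σ (c₀ + τ • α) i)
        (∑ i, (β i + 2) * fderiv ℝ (fun c => σ c i) c₀ α) 0 :=
      HasDerivAt.fun_sum fun i _ => (hder i).const_mul _
    have d2 : HasDerivAt (fun τ : ℝ => (1 / 2) * ∑ i, ∑ j, A i j * σ (c₀ + τ • α) i * σ (c₀ + τ • α) j)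
        ((1 / 2) * ∑ i, ∑ j, (A i j * fderiv ℝ (fun c => σ c i) c₀ α * σ (c₀ + (0 : ℝ) • α) j +
          A i j * σ (c₀ + (0 : ℝ) • α) i * fderiv ℝ (fun c => σ c j) c₀ α)) 0 :=
      (HasDerivAt.fun_sum fun i _ => HasDerivAt.fun_sum fun j _ =>
        ((hder i).const_mul (A i j)).fun_mul (hder j)).const_mul _
    have d3 := d1.unique (d2.congr_of_eventuallyEq hpoh)
    rw [hline0] at d3
    have d4 : ∑ i, ∑ j, A i j * σ c₀ i * fderiv ℝ (fun c => σ c j) c₀ α =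
        ∑ i, ∑ j, A i j * fderiv ℝ (fun c => σ c i) c₀ α * σ c₀ j := by
      rw [Finset.sum_comm]
      refine Finset.sum_congr rfl fun i _ => Finset.sum_congr rfl fun j _ => ?_
      rw [hs j i]; ring
    simp only [Finset.sum_add_distrib] at d3
    rw [d4] at d3
    have d5 : ∑ i, ∑ j, A i j * fderiv ℝ (fun c => σ c i) c₀ α * σ c₀ j =
        ∑ i, (∑ j, A i j * σ c₀ j) * fderiv ℝ (fun c => σ c i) c₀ α := by
      refine Finset.sum_congr rfl fun i _ => ?_
      rw [Finset.sum_mul]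
      exact Finset.sum_congr rfl fun j _ => by ring
    rw [d5, Fin.sum_univ_castSucc, Fin.sum_univ_castSucc (f := fun i =>
      (∑ j, A i j * σ c₀ j) * fderiv ℝ (fun c => σ c i) c₀ α)] at d3
    simp only [hL0, mul_zero, Finset.sum_const_zero, zero_add] at d3
    have d6 := hW₀.sigma_gt hpos (Fin.last n)
    intro i
    refine Fin.lastCases ?_ (fun j => hL0 j) i
    have d7 : ((β (Fin.last n) + 2) - ∑ j, A (Fin.last n) j * σ c₀ j) *
        fderiv ℝ (fun c => σ c (Fin.last n)) c₀ α = 0 := by linarith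
    rcases mul_eq_zero.1 d7 with h | h
    · linarith
    · exact h
  -- apply the core theorem
  set a : Fin (n + 1) → ℝ := Fin.snoc (α := fun _ => ℝ) α 0 with ha
  choose! W hW using hLS
  have hfam : ∀ᶠ τ : ℝ in 𝓝[>] (0 : ℝ), LSol (fun i j => A i j) (fun i => β i + 2)
      (fun i => (Fin.snoc (α := fun _ => ℝ) c₀ 0 : Fin (n + 1) → ℝ) i + τ * a i)
      (fun i t => U (c₀ + τ • α) i (Real.exp t)) (W (c₀ + τ • α)) (σ (c₀ + τ • α)) := by
    filter_upwards [nhdsWithin_le_nhds hev] with τ hτ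
    have h1 := hW _ hτ
    have e : (Fin.snoc (α := fun _ => ℝ) (c₀ + τ • α) 0 : Fin (n + 1) → ℝ) =
        fun i => (Fin.snoc (α := fun _ => ℝ) c₀ 0 : Fin (n + 1) → ℝ) i + τ * a i := by
      ext i
      refine Fin.lastCases ?_ (fun j => ?_) i
      · simp [ha]
      · simp [ha]
    rw [e] at h1
    exact h1
  have hlim : ∀ i, Tendsto (fun τ : ℝ => (σ (c₀ + τ • α) i - σ c₀ i) / τ) (𝓝[>] (0 : ℝ)) (𝓝 0) := by
    intro i
    have h1 := (hder i).tendsto_slope_zero_right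
    rw [hall i] at h1
    refine h1.congr fun τ => ?_
    rw [zero_add, hline0, smul_eq_mul, div_eq_inv_mul]
  have hcore := (hW c₀ hc₀V).core hpos hs hb a (fun τ i t => U (c₀ + τ • α) i (Real.exp t))
    (fun τ => W (c₀ + τ • α)) (fun τ => σ (c₀ + τ • α)) hfam hlim
  -- irreducibility
  have ha0 : ∀ i, a i = 0 := by
    by_contra! hex
    obtain ⟨i₁, hi₁⟩ := hex
    obtain ⟨i, hi, j, hj, hij⟩ := hirr (Finset.univ.filter fun i => a i = 0)
      ⟨Fin.last n, by simp [ha]⟩ (fun h => hi₁ (by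
        have : i₁ ∈ Finset.univ.filter fun i => a i = 0 := by rw [h]; exact Finset.mem_univ _
        simpa using this))
    have hi0 : a i = 0 := by simpa using hi
    have hj0 : a j ≠ 0 := by simpa using hj
    have h1 := hcore i j hij
    rw [hi0, zero_div, eq_comm, div_eq_zero_iff] at h1
    rcases h1 with h1 | h1
    · exact hj0 h1
    · exact (hb j).ne' h1
  apply hα
  ext j
  have := ha0 j.castSucc
  simpa [ha] using this
end
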